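/- arXiv:1111.1428 — 2 statements merged into one kernel-verified Lean document; each statement's English description precedes it below -/
import Mathlib

section
/- Fix integers m ≥ 2, s ≥ 5 and d ≥ 2s+2. For every integer r with 2d+2−s ≤ r ≤ 2d+s−7 and r+s ≡ 0 (mod 2), one has σ_{s,r}(X_{m,d}) ≠ ∅. -/
open scoped LinearAlgebra.Projectivization

noncomputable section

/-- The polynomial ring in `m+1` variables over `K`: homogeneous coordinate ring of `ℙ^m`. -/
abbrev PR (K : Type) [Field K] (m : ℕ) : Type := MvPolynomial (Fin (m+1)) K

/-- The space of degree-`d` forms in `m+1` variables. -/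
abbrev Hd (K : Type) [Field K] (m d : ℕ) : Submodule K (PR K m) :=
  MvPolynomial.homogeneousSubmodule (Fin (m+1)) K d

/-- Projective `m`-space over `K`. -/
abbrev Pm (K : Type) [Field K] (m : ℕ) := ℙ K (Fin (m+1) → K)

/-- The target projective space `ℙ^n`, `n = C(m+d,m) - 1`, of the degree-`d` Veronese
embedding, realized as the projectivization of the dual of the space of degree-`d` forms
(the space of degree-`d` symmetric tensors). -/
abbrev PN (K : Type) [Field K] (m d : ℕ) := ℙ K (Module.Dual K (Hd K m d))

variable {K : Type} [Field K] {m : ℕ}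

/-- Hilbert function of `R/I` in degree `t`. -/
def hilbQ (I : Ideal (PR K m)) (t : ℕ) : ℕ :=
  Module.finrank K ((Hd K m t).map (Ideal.Quotient.mkₐ K I).toLinearMap)

/-- The degree (length) of the projective scheme defined by `I`: the eventual value of the
Hilbert function of `R/I`. -/
def idealDeg (I : Ideal (PR K m)) : ℕ := Filter.limsup (fun t => hilbQ I t) Filter.atTop

/-- `h^1(𝓘_Z(d))` for the zero-dimensional scheme `Z` with (saturated) ideal `I`:
it equals `deg Z - dim (R/I)_d`. -/
def h1I (I : Ideal (PR K m)) (d : ℕ) : ℕ := idealDeg I - hilbQ I d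

/-- An ideal is homogeneous. -/
def IsHomogI (I : Ideal (PR K m)) : Prop :=
  ∀ f ∈ I, ∀ n : ℕ, MvPolynomial.homogeneousComponent n f ∈ I

/-- An ideal is saturated with respect to the irrelevant maximal ideal. -/
def IsSatI (I : Ideal (PR K m)) : Prop :=
  ∀ f : PR K m, (∀ i, MvPolynomial.X i * f ∈ I) → f ∈ I

/-- A closed subscheme of `ℙ^m`, given by its saturated homogeneous ideal. -/
structure PSub (K : Type) [Field K] (m : ℕ) where
  I : Ideal (PR K m)
  homog : IsHomogI I
  sat : IsSatI I

/-- A (closed sub)scheme is zero-dimensional iff the Hilbert function of `R/I` is bounded. -/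
def IsZeroDimI (I : Ideal (PR K m)) : Prop := ∃ C, ∀ t, hilbQ I t ≤ C

/-- A polynomial vanishes at a projective point (every homogeneous component vanishes
at a representative). -/
def vanishesAt (f : PR K m) (a : Pm K m) : Prop :=
  ∀ n : ℕ, MvPolynomial.eval a.rep (MvPolynomial.homogeneousComponent n f) = 0

/-- Zero locus of an ideal in `ℙ^m`. -/
def pzeroLocus (I : Ideal (PR K m)) : Set (Pm K m) := {a | ∀ f ∈ I, vanishesAt f a}

/-- The (saturated) homogeneous ideal of a set of points of `ℙ^m`. -/
def idealOfSet (S : Set (Pm K m)) : Ideal (PR K m) :=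
  Ideal.span {f : PR K m | (∃ n, f.IsHomogeneous n) ∧ ∀ a ∈ S, MvPolynomial.eval a.rep f = 0}

/-- Saturation of a homogeneous ideal: the smallest saturated homogeneous ideal containing it. -/
def satIdeal (J : Ideal (PR K m)) : Ideal (PR K m) := sInf {J' | J ≤ J' ∧ IsHomogI J' ∧ IsSatI J'}

/-- The scheme defined by the (saturated) ideal `I` is reduced. -/
def IsReducedI (I : Ideal (PR K m)) : Prop := I = idealOfSet (pzeroLocus I)

/-- Connected component of a zero-dimensional scheme at a point `a`: the largest subscheme
supported at `a`, i.e. the `a`-primary component. -/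
def componentAt (I : Ideal (PR K m)) (a : Pm K m) : Ideal (PR K m) :=
  sInf {J | I ≤ J ∧ IsHomogI J ∧ IsSatI J ∧ pzeroLocus J ⊆ {a}}

/-- Residual scheme of `Z` with respect to the hypersurface `f = 0`: the colon ideal `(I_Z : f)`. -/
def resIdeal (I : Ideal (PR K m)) (f : PR K m) : Ideal (PR K m) :=
  Submodule.colon I (Ideal.span {f})

/-- Degree of the scheme-theoretic intersection of the subschemes defined by `I` and `J`. -/
def interDeg (I J : Ideal (PR K m)) : ℕ := idealDeg (I ⊔ J)

/-- The degree-`d` Veronese image of a vector `v`: the evaluation-at-`v` functional on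
degree-`d` forms. -/
def nu (d : ℕ) (v : Fin (m+1) → K) : Module.Dual K (Hd K m d) :=
  (MvPolynomial.aeval v).toLinearMap ∘ₗ (Hd K m d).subtype

/-- The linear span of the Veronese image `ν_d(S)` of a set `S` of points of `ℙ^m`. -/
def dualSpan (d : ℕ) (S : Set (Pm K m)) : Submodule K (Module.Dual K (Hd K m d)) :=
  Submodule.span K ((fun a => nu d a.rep) '' S)

/-- The linear span `⟨ν_d(Z)⟩` of the Veronese image of the subscheme with ideal `I`:
the annihilator of the degree-`d` part of `I`. -/
def schemeSpanSub (I : Ideal (PR K m)) (d : ℕ) : Submodule K (Module.Dual K (Hd K m d)) where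
  carrier := {φ | ∀ f : Hd K m d, (f : PR K m) ∈ I → φ f = 0}
  add_mem' := by
    intro a b ha hb f hf
    simp [LinearMap.add_apply, ha f hf, hb f hf]
  zero_mem' := by intro f hf; simp
  smul_mem' := by
    intro c a ha f hf
    simp [LinearMap.smul_apply, ha f hf]

/-- `P ∈ ⟨ν_d(Z)⟩`, for `Z` the subscheme with ideal `I`. -/
def inSpanI (I : Ideal (PR K m)) (d : ℕ) (P : PN K m d) : Prop := P.rep ∈ schemeSpanSub I d

/-- `P ∈ ⟨ν_d(S)⟩` for a set `S` of points of `ℙ^m`. -/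
def inSpanSet (d : ℕ) (S : Set (Pm K m)) (P : PN K m d) : Prop := P.rep ∈ dualSpan d S

/-- `L` is a linear subspace of `ℙ^m`. -/
def IsLinearSub (L : Set (Pm K m)) : Prop :=
  ∃ W : Submodule K (Fin (m+1) → K), L = {a | a.submodule ≤ W}

/-- `L` is a line of `ℙ^m`. -/
def IsLine (L : Set (Pm K m)) : Prop :=
  ∃ W : Submodule K (Fin (m+1) → K), Module.finrank K W = 2 ∧ L = {a | a.submodule ≤ W}

/-- `L` is a plane of `ℙ^m`. -/
def IsPlane (L : Set (Pm K m)) : Prop :=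
  ∃ W : Submodule K (Fin (m+1) → K), Module.finrank K W = 3 ∧ L = {a | a.submodule ≤ W}

/-- `J` is the (saturated homogeneous) ideal of a conic of `ℙ^m`: a degree-2 curve contained
in a plane (possibly reducible). -/
def IsConic (J : Ideal (PR K m)) : Prop :=
  ∃ (W : Submodule K (Fin (m+1) → K)) (q : PR K m),
    Module.finrank K W = 3 ∧ q.IsHomogeneous 2 ∧
    q ∉ idealOfSet {a : Pm K m | a.submodule ≤ W} ∧
    J = satIdeal (idealOfSet {a : Pm K m | a.submodule ≤ W} ⊔ Ideal.span {q})

/-- The algebra of polynomial functions on a `K`-vector space. -/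
def polyFunctions (K V : Type) [Field K] [AddCommGroup V] [Module K V] : Subalgebra K (V → K) :=
  Algebra.adjoin K {g : V → K | ∃ φ : V →ₗ[K] K, g = ⇑φ}

/-- Zariski closure of a subset of a projective space. -/
def zClosure {V : Type} [AddCommGroup V] [Module K V] (T : Set (ℙ K V)) : Set (ℙ K V) :=
  {P | ∀ F ∈ polyFunctions K V, (∀ Q ∈ T, ∀ c : K, F (c • Q.rep) = 0) →
    ∀ c : K, F (c • P.rep) = 0}

/-- The Veronese variety `X_{m,d} = ν_d(ℙ^m)` as a subset of `PN K m d`. -/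
def XSet (K : Type) [Field K] (m d : ℕ) : Set (PN K m d) :=
  {Q | ∃ a : Pm K m, Q.submodule = Submodule.span K {nu d a.rep}}

/-- The image `ν_d(S)` of a set of points of `ℙ^m`, as a subset of `PN K m d`. -/
def nuSet (d : ℕ) (S : Set (Pm K m)) : Set (PN K m d) :=
  {Q | ∃ a ∈ S, Q.submodule = Submodule.span K {nu d a.rep}}

/-- The rank of a point `P` of `PN` with respect to a subset `Y ⊆ PN`. -/
def rankWrt {m d : ℕ} (Y : Set (PN K m d)) (P : PN K m d) : ℕ :=
  sInf {r | ∃ S : Finset (PN K m d), ↑S ⊆ Y ∧ S.card = r ∧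
    P.rep ∈ Submodule.span K (Projectivization.rep '' (S : Set (PN K m d)))}

/-- The `s`-th secant variety of `Y ⊆ PN`: the Zariski closure of the union of the spans
of `s` points of `Y`. -/
def secantWrt {m d : ℕ} (Y : Set (PN K m d)) (s : ℕ) : Set (PN K m d) :=
  zClosure {Q | ∃ S : Finset (PN K m d), ↑S ⊆ Y ∧ S.card ≤ s ∧
    Q.rep ∈ Submodule.span K (Projectivization.rep '' (S : Set (PN K m d)))}

/-- The border rank of `P` with respect to `Y ⊆ PN`. -/
def brankWrt {m d : ℕ} (Y : Set (PN K m d)) (P : PN K m d) : ℕ :=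
  sInf {s | 0 < s ∧ P ∈ secantWrt Y s}

/-- Symmetric rank. -/
def srank {m : ℕ} (d : ℕ) (P : PN K m d) : ℕ := rankWrt (XSet K m d) P

/-- Border rank. -/
def brank {m : ℕ} (d : ℕ) (P : PN K m d) : ℕ := brankWrt (XSet K m d) P

/-- Cactus rank: minimal degree of a zero-dimensional closed subscheme `E ⊂ ℙ^m` with
`P ∈ ⟨ν_d(E)⟩`. -/
def crank {m : ℕ} (d : ℕ) (P : PN K m d) : ℕ :=
  sInf {c | ∃ Z : PSub K m, IsZeroDimI Z.I ∧ idealDeg Z.I = c ∧ inSpanI Z.I d P}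

/-- `σ_{s,r}(X_{m,d})`. -/
def sigmaSet (K : Type) [Field K] (m d s r : ℕ) : Set (PN K m d) :=
  {P | brank d P = s ∧ srank d P = r}

/-- A property `Φ` holds for a general `k`-tuple of points of the linear subspace of `ℙ^m`
determined by `W`. -/
def GenerallyOn (W : Submodule K (Fin (m+1) → K)) (k : ℕ)
    (Φ : (Fin k → Pm K m) → Prop) : Prop :=
  ∃ w : Fin 3 → W, Submodule.span K (Set.range fun j => (w j : Fin (m+1) → K)) = W ∧
    ∃ F : MvPolynomial (Fin k × Fin 3) K, F ≠ 0 ∧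
      ∀ c : Fin k → Fin 3 → K,
        MvPolynomial.eval (fun p => c p.1 p.2) F ≠ 0 →
        ∀ e : Fin k → Pm K m,
          (∀ i, (e i).submodule = Submodule.span K {∑ j, c i j • (w j : Fin (m+1) → K)}) → Φ e

end

/-!
Let `φ` be the functional sending a form of degree `d` to the coefficient of `x ^ n` in its
restriction to the conic `x ↦ (1 : x : x²)`, plus the sum of its values at `k` points of the
tangent line `ℓ` to the conic at `x = 0`, all different from the point of contact.

Averaging over the roots of unity of order `N` cuts the powers of `x` down to a residue class
modulo `N`. For `N = 2 d + 1 - n` this isolates the exponent `n`, so `φ` has rank at most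
`2 d + 1 - n + k`; for `N = n + 1` it leaves terms that disappear in the limit, so `φ` has border
rank at most `n + 1 + k`. A nonsingular catalecticant of size `n + 1 + k` shows that the border
rank is not smaller.

For the lower bound on the rank, suppose that `φ` lies in the span of a set `A ∪ B` of points, with
`A` off `ℓ` and `B` on `ℓ`. A form `g` of degree `t` vanishing on `A`, times the equation of `ℓ`
and any further form, is killed by `φ`, so for `n + 2 t ≤ 2 d` the restriction of `g` to the conic
vanishes to order at least `n - 1` at `x = 0`. If `g = ℓ f + p` with `p` a quadratic polynomial in
the coordinate on `ℓ`, the two lowest coefficients of `p` are those of this restriction and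
therefore zero. Consequently the Hilbert function of `A` grows by at least `2` from each degree to
the next. While `t + #B ≤ k`, multiplying `g` by a form through `B` and all but one of the `k`
points shows that `p` vanishes at the remaining point as well, so `p = 0` and the growth is at
least `3`. Adding up gives `#A + #B ≥ 2 d + 1 - n + k`.
-/

open Polynomial

noncomputable section

variable {K : Type} [Field K] {m d : ℕ}

section Polynomials

lemma mem_degreeLT_succ_iff {p : K[X]} {k : ℕ} : p ∈ degreeLT K (k + 1) ↔ p.natDegree ≤ k := by
  rw [degreeLT_succ_eq_degreeLE, mem_degreeLE, natDegree_le_iff_degree_le]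

lemma finrank_degreeLT (k : ℕ) : Module.finrank K (degreeLT K k) = k := by
  rw [Module.finrank_eq_card_basis (degreeLT.basis K k), Fintype.card_fin]

lemma exists_X_pow_dvd_eval_eq_zero (Z : Finset K) (k : ℕ) {y : K} (hy : y ≠ 0) (hyZ : y ∉ Z) :
    ∃ q : K[X], q.natDegree = Z.card + k ∧ X ^ k ∣ q ∧ (∀ z ∈ Z, q.eval z = 0) ∧ q.eval y ≠ 0 := by
  refine ⟨Lagrange.nodal Z id * X ^ k, ?_, dvd_mul_left _ _, fun z hz => ?_, ?_⟩
  · rw [natDegree_mul_X_pow _ Lagrange.nodal_ne_zero, Lagrange.natDegree_nodal]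
  · rw [eval_mul, ← id_def z, Lagrange.eval_nodal_at_node hz, zero_mul]
  · rw [eval_mul, eval_pow, eval_X]
    refine mul_ne_zero (Lagrange.eval_nodal_not_at_node fun z hz => ?_) (pow_ne_zero k hy)
    exact (ne_of_mem_of_not_mem hz hyZ).symm

end Polynomials

section Zariski

variable {V : Type} [AddCommGroup V] [Module K V]

lemma mk_mem_zClosure_iff {T : Set (ℙ K V)} {v : V} (hv : v ≠ 0) :
    Projectivization.mk K v hv ∈ zClosure T ↔
      ∀ F ∈ polyFunctions K V, (∀ Q ∈ T, ∀ c : K, F (c • Q.rep) = 0) → ∀ c : K, F (c • v) = 0 := by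
  obtain ⟨a, ha⟩ := Projectivization.exists_smul_eq_mk_rep K v hv
  refine forall₂_congr fun F _ => forall_congr' fun _ => ?_
  rw [← ha]
  refine ⟨fun h c => ?_, fun h c => ?_⟩
  · simpa [Units.smul_def, smul_smul] using h (c * (a⁻¹ : Kˣ))
  · simpa [Units.smul_def, smul_smul] using h (c * a)

lemma exists_polynomial_eval_eq_of_mem_polyFunctions {γ : K → V}
    (hγ : ∀ ℓ : Module.Dual K V, ∃ p : K[X], ∀ x, ℓ (γ x) = p.eval x)
    {F : V → K} (hF : F ∈ polyFunctions K V) : ∃ p : K[X], ∀ x, F (γ x) = p.eval x := by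
  induction hF using Algebra.adjoin_induction with
  | mem F hF =>
    obtain ⟨ℓ, rfl⟩ := hF
    exact hγ ℓ
  | algebraMap c => exact ⟨C c, fun x => by simp⟩
  | add F G _ _ ihF ihG =>
    obtain ⟨⟨p, hp⟩, q, hq⟩ := ihF, ihG
    exact ⟨p + q, fun x => by simp [hp, hq]⟩
  | mul F G _ _ ihF ihG =>
    obtain ⟨⟨p, hp⟩, q, hq⟩ := ihF, ihG
    exact ⟨p * q, fun x => by simp [hp, hq]⟩

end Zariski

section SymRank

variable {n n' r : ℕ} {φ ψ : Module.Dual K (Hd K m d)}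

lemma nu_apply (v : Fin (m + 1) → K) (f : Hd K m d) :
    nu d v f = MvPolynomial.eval v (f : PR K m) := by
  simp [nu, MvPolynomial.aeval_eq_eval]

lemma nu_smul (c : K) (v : Fin (m + 1) → K) : nu d (c • v) = c ^ d • nu d v := by
  ext ⟨f, hf⟩
  have hdeg : ∀ t ∈ f.support, ∑ i, t i = d := fun t ht => by
    simpa [Finsupp.degree_eq_weight_one, Finsupp.weight_apply, Finsupp.sum_fintype] using
      hf (MvPolynomial.mem_support_iff.mp ht)
  simp only [nu_apply, LinearMap.smul_apply, MvPolynomial.eval_eq', smul_eq_mul, Finset.mul_sum]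
  refine Finset.sum_congr rfl fun t ht => ?_
  simp only [Pi.smul_apply, smul_eq_mul, mul_pow, Finset.prod_mul_distrib,
    Finset.prod_pow_eq_pow_sum, hdeg t ht]
  ring

lemma nu_ne_zero {v : Fin (m + 1) → K} (hv : v ≠ 0) : nu d v ≠ 0 := by
  obtain ⟨i, hi⟩ := Function.ne_iff.mp hv
  intro h
  have hpow : (MvPolynomial.X i ^ d : PR K m) ∈ Hd K m d := by
    simpa using (MvPolynomial.isHomogeneous_X K i).pow d
  have hval := LinearMap.congr_fun h ⟨_, hpow⟩
  rw [nu_apply, LinearMap.zero_apply, map_pow, MvPolynomial.eval_X] at hval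
  exact pow_ne_zero d hi hval

/-- The Veronese embedding `ν_d : ℙ^m → ℙ^n`. -/
def veronese (d : ℕ) (a : Pm K m) : PN K m d :=
  Projectivization.mk K (nu d a.rep) (nu_ne_zero a.rep_nonzero)

lemma range_veronese : Set.range (veronese d) = XSet K m d := by
  ext Q
  refine exists_congr fun a => ?_
  rw [eq_comm, ← Projectivization.submodule_injective.eq_iff, veronese,
    Projectivization.submodule_mk]

lemma span_rep_image_veronese (S : Set (Pm K m)) :
    Submodule.span K (Projectivization.rep '' (veronese d '' S)) = dualSpan d S := by
  rw [dualSpan, Submodule.span_eq_iSup_of_singleton_spans, Set.image_image,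
    Submodule.span_eq_iSup_of_singleton_spans, iSup_image, iSup_image]
  simp only [← Projectivization.submodule_eq, veronese, Projectivization.submodule_mk]

/-- The symmetric rank of the functional `φ`, a point of the affine cone over `ℙ^n`, is at
most `n`. Unlike `srank`, this makes sense for `φ = 0`. -/
def SymRankLE (φ : Module.Dual K (Hd K m d)) (n : ℕ) : Prop :=
  ∃ S : Finset (Pm K m), S.card ≤ n ∧ φ ∈ dualSpan d (S : Set (Pm K m))

lemma nu_mem_dualSpan {S : Set (Pm K m)} {v : Fin (m + 1) → K} (hv : v ≠ 0)
    (hS : Projectivization.mk K v hv ∈ S) : nu d v ∈ dualSpan d S := by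
  obtain ⟨a, ha⟩ := Projectivization.exists_smul_eq_mk_rep K v hv
  have hmem : nu d (a • v) ∈ dualSpan d S := by
    rw [ha]
    exact Submodule.subset_span ⟨_, hS, rfl⟩
  rw [Units.smul_def, nu_smul] at hmem
  exact (Submodule.smul_mem_iff _ (pow_ne_zero d a.ne_zero)).1 hmem

lemma symRankLE_nu {v : Fin (m + 1) → K} (hv : v ≠ 0) (hn : 0 < n) : SymRankLE (nu d v) n :=
  ⟨{Projectivization.mk K v hv}, by rwa [Finset.card_singleton], nu_mem_dualSpan hv (by simp)⟩

lemma symRankLE_sum_smul_nu {ι : Type} (s : Finset ι) (c : ι → K) {v : ι → Fin (m + 1) → K}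
    (hv : ∀ i, v i ≠ 0) : SymRankLE (∑ i ∈ s, c i • nu d (v i)) s.card := by
  classical
  refine ⟨s.image fun i => Projectivization.mk K (v i) (hv i), Finset.card_image_le, ?_⟩
  refine Submodule.sum_mem _ fun i hi => Submodule.smul_mem _ _ ?_
  exact nu_mem_dualSpan (hv i) (Finset.mem_coe.2 (Finset.mem_image_of_mem _ hi))

lemma SymRankLE.add (hφ : SymRankLE φ n) (hψ : SymRankLE ψ n') : SymRankLE (φ + ψ) (n + n') := by
  classical
  obtain ⟨S, hSn, hS⟩ := hφ
  obtain ⟨T, hTn, hT⟩ := hψ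
  refine ⟨S ∪ T, (Finset.card_union_le S T).trans (add_le_add hSn hTn), ?_⟩
  have hmono {A : Finset (Pm K m)} (h : A ⊆ S ∪ T) :
      dualSpan d (A : Set (Pm K m)) ≤ dualSpan d ↑(S ∪ T) :=
    Submodule.span_mono (Set.image_mono (Finset.coe_subset.2 h))
  exact add_mem (hmono Finset.subset_union_left hS) (hmono Finset.subset_union_right hT)

lemma SymRankLE.smul (c : K) (hφ : SymRankLE φ n) : SymRankLE (c • φ) n :=
  hφ.imp fun _ h => ⟨h.1, Submodule.smul_mem _ c h.2⟩

lemma symRankLE_iff_exists_subset_XSet :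
    SymRankLE φ n ↔ ∃ S : Finset (PN K m d), ↑S ⊆ XSet K m d ∧ S.card ≤ n ∧
      φ ∈ Submodule.span K (Projectivization.rep '' (S : Set (PN K m d))) := by
  classical
  constructor
  · rintro ⟨S, hSn, hS⟩
    refine ⟨S.image (veronese d), ?_, Finset.card_image_le.trans hSn, ?_⟩
    · rw [Finset.coe_image, ← range_veronese]
      exact Set.image_subset_range _ _
    · rwa [Finset.coe_image, span_rep_image_veronese]
  · rintro ⟨S, hSX, hSn, hS⟩
    rw [← range_veronese, ← Set.image_univ] at hSX
    obtain ⟨T, -, hinj, rfl⟩ := Finset.exists_subset_injOn_image_eq_of_surjOn _ _ hSX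
    rw [Finset.card_image_of_injOn hinj] at hSn
    rw [Finset.coe_image, span_rep_image_veronese] at hS
    exact ⟨T, hSn, hS⟩

lemma srank_mk_eq (hφ : φ ≠ 0) (hr : SymRankLE φ r) (hmin : ∀ n, SymRankLE φ n → r ≤ n) :
    srank d (Projectivization.mk K φ hφ) = r := by
  have hrep (n : ℕ) : SymRankLE (Projectivization.mk K φ hφ).rep n ↔ SymRankLE φ n := by
    obtain ⟨a, ha⟩ := Projectivization.exists_smul_eq_mk_rep K φ hφ
    rw [← ha]
    exact ⟨fun h => by simpa [Units.smul_def] using h.smul (↑a⁻¹ : K), fun h => h.smul (a : K)⟩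
  have hle {S : Finset (PN K m d)} (hSX : ↑S ⊆ XSet K m d)
      (hS : (Projectivization.mk K φ hφ).rep ∈
        Submodule.span K (Projectivization.rep '' (S : Set (PN K m d)))) : r ≤ S.card :=
    hmin _ ((hrep _).1 (symRankLE_iff_exists_subset_XSet.2 ⟨S, hSX, le_rfl, hS⟩))
  obtain ⟨S, hSX, hSr, hS⟩ := symRankLE_iff_exists_subset_XSet.1 ((hrep r).2 hr)
  refine IsLeast.csInf_eq ⟨⟨S, hSX, hSr.antisymm (hle hSX hS), hS⟩, ?_⟩
  rintro _ ⟨T, hTX, rfl, hT⟩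
  exact hle hTX hT

lemma secantWrt_XSet_eq :
    secantWrt (XSet K m d) n = zClosure {Q : PN K m d | SymRankLE Q.rep n} := by
  simp only [secantWrt, symRankLE_iff_exists_subset_XSet]

end SymRank

section Secant

variable {n : ℕ} {φ : Module.Dual K (Hd K m d)}

lemma mk_mem_secantWrt_XSet_iff (hn : 0 < n) (hφ : φ ≠ 0) :
    Projectivization.mk K φ hφ ∈ secantWrt (XSet K m d) n ↔
      ∀ F ∈ polyFunctions K (Module.Dual K (Hd K m d)),
        (∀ ψ, SymRankLE ψ n → F ψ = 0) → ∀ c : K, F (c • φ) = 0 := by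
  rw [secantWrt_XSet_eq, mk_mem_zClosure_iff]
  refine forall₂_congr fun F _ => imp_congr_left ⟨fun h => ?_, fun h Q hQ c => h _ (hQ.smul c)⟩
  have hmk {ψ : Module.Dual K (Hd K m d)} (hψ0 : ψ ≠ 0) (hψ : SymRankLE ψ n) (c : K) :
      F (c • ψ) = 0 := by
    obtain ⟨a, ha⟩ := Projectivization.exists_smul_eq_mk_rep K ψ hψ0
    have hrank : SymRankLE (Projectivization.mk K ψ hψ0).rep n := ha ▸ hψ.smul (a : K)
    have hrep := h _ hrank (c * (a⁻¹ : Kˣ))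
    rwa [← ha, Units.smul_def, smul_smul, mul_assoc, Units.inv_mul, mul_one] at hrep
  intro ψ hψ
  rcases eq_or_ne ψ 0 with rfl | hψ0
  · have hone : (1 : Fin (m + 1) → K) ≠ 0 := one_ne_zero
    rw [← zero_smul K (nu d 1)]
    exact hmk (nu_ne_zero hone) (symRankLE_nu hone hn) 0
  · simpa using hmk hψ0 hψ 1

/-- The catalecticant matrix of a functional `φ` on `d`-forms with respect to two families of
forms of complementary degrees. -/
def catalecticant {ι : Type} {f g : ι → PR K m} (hfg : ∀ i j, f i * g j ∈ Hd K m d)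
    (φ : Module.Dual K (Hd K m d)) : Matrix ι ι K :=
  Matrix.of fun i j => φ ⟨f i * g j, hfg i j⟩

variable {ι : Type} [Fintype ι] [DecidableEq ι] {f g : ι → PR K m}

lemma det_catalecticant_eq_zero (hfg : ∀ i j, f i * g j ∈ Hd K m d) (hφ : SymRankLE φ n)
    (hn : n < Fintype.card ι) : (catalecticant hfg φ).det = 0 := by
  obtain ⟨S, hSn, hS⟩ := hφ
  obtain ⟨c, rfl⟩ := (Submodule.mem_span_image_finset_iff_exists_fun K).1 hS
  let A : Matrix ι S K := Matrix.of fun i a => MvPolynomial.eval a.1.rep (f i)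
  let B : Matrix S ι K := Matrix.of fun a j => c a * MvPolynomial.eval a.1.rep (g j)
  have hmul : catalecticant hfg (∑ a, c a • nu d a.1.rep) = A * B := by
    ext i j
    simp only [catalecticant, A, B, Matrix.of_apply, Matrix.mul_apply, LinearMap.sum_apply,
      LinearMap.smul_apply, nu_apply, map_mul, smul_eq_mul, mul_left_comm (c _)]
  rw [hmul]
  by_contra hdet
  have hunit : IsUnit (A * B) := (Matrix.isUnit_iff_isUnit_det _).2 (isUnit_iff_ne_zero.2 hdet)
  have hrank : Fintype.card ι ≤ Fintype.card S := Matrix.rank_of_isUnit _ hunit ▸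
    (Matrix.rank_mul_le_left A B).trans (Matrix.rank_le_card_width A)
  rw [Fintype.card_coe] at hrank
  omega

lemma card_le_of_mk_mem_secantWrt (hfg : ∀ i j, f i * g j ∈ Hd K m d)
    (hdet : (catalecticant hfg φ).det ≠ 0) (hφ : φ ≠ 0) (hn : 0 < n)
    (hmem : Projectivization.mk K φ hφ ∈ secantWrt (XSet K m d) n) : Fintype.card ι ≤ n := by
  by_contra! hlt
  refine hdet ?_
  have hF : (fun ψ => (catalecticant hfg ψ).det) ∈ polyFunctions K (Module.Dual K (Hd K m d)) := by
    have hentry (i j : ι) : (fun ψ => catalecticant hfg ψ i j) ∈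
        polyFunctions K (Module.Dual K (Hd K m d)) :=
      Algebra.subset_adjoin ⟨Module.Dual.eval K _ ⟨f i * g j, hfg i j⟩, rfl⟩
    have hexpand : (fun ψ => (catalecticant hfg ψ).det) = ∑ σ : Equiv.Perm ι,
        (Equiv.Perm.sign σ : ℤ) • ∏ i, fun ψ => catalecticant hfg ψ (σ i) i := by
      ext ψ
      simp [Matrix.det_apply, Units.smul_def]
    rw [hexpand]
    exact sum_mem fun σ _ => zsmul_mem (prod_mem fun i _ => hentry _ _) _
  simpa using (mk_mem_secantWrt_XSet_iff hn hφ).1 hmem _ hF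
    (fun ψ hψ => det_catalecticant_eq_zero hfg hψ hlt) 1

lemma mk_mem_secantWrt_of_curve [Infinite K] (hn : 0 < n) {γ : K → Module.Dual K (Hd K m d)}
    (hγ : ∀ ℓ : Module.Dual K (Module.Dual K (Hd K m d)), ∃ p : K[X], ∀ x, ℓ (γ x) = p.eval x)
    (hrank : ∀ x ≠ 0, SymRankLE (γ x) n) (h0 : γ 0 ≠ 0) :
    Projectivization.mk K (γ 0) h0 ∈ secantWrt (XSet K m d) n := by
  refine (mk_mem_secantWrt_XSet_iff hn h0).2 fun F hF hvanish c => ?_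
  have hcγ (ℓ : Module.Dual K (Module.Dual K (Hd K m d))) :
      ∃ p : K[X], ∀ x, ℓ (c • γ x) = p.eval x := by
    simpa using hγ (c • ℓ)
  obtain ⟨p, hp⟩ := exists_polynomial_eval_eq_of_mem_polyFunctions hcγ hF
  have hp0 : p = 0 := by
    refine eq_zero_of_infinite_isRoot p ((Set.finite_singleton (0 : K)).infinite_compl.mono ?_)
    intro x hx
    exact (hp x).symm.trans (hvanish _ ((hrank x hx).smul c))
  rw [hp, hp0, eval_zero]

end Secant

section Conic

variable {e : Fin 3 ↪ Fin (m + 1)} {n : ℕ} {p : K[X]}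

/-- The point `(1 : x : x²)` of the smooth conic in the coordinate plane spanned by the
coordinates `e 0`, `e 1`, `e 2`. It is used both for scalars and for the generic point `x = X`. -/
def conicPoint {R : Type} [CommSemiring R] (e : Fin 3 ↪ Fin (m + 1)) (x : R) : Fin (m + 1) → R :=
  Function.extend e ![1, x, x ^ 2] 0

/-- The point `(1 : y : 0)` of the tangent line to the conic at `(1 : 0 : 0)`. -/
def tangentPoint (e : Fin 3 ↪ Fin (m + 1)) (y : K) : Fin (m + 1) → K :=
  Function.extend e ![1, y, 0] 0

/-- The restriction of forms to the conic, parametrized by `X ↦ (1 : X : X²)`. -/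
def conicRestrict (e : Fin 3 ↪ Fin (m + 1)) : PR K m →ₐ[K] K[X] :=
  MvPolynomial.aeval (conicPoint e X)

/-- The form of degree `n` in the coordinates `e 0`, `e 1` that dehomogenizes to `p` at `e 0 = 1`;
the monomials of `p` of degree larger than `n` are dropped. -/
def binaryForm (e : Fin 3 ↪ Fin (m + 1)) (n : ℕ) : K[X] →ₗ[K] PR K m :=
  (MvPolynomial.rename ![e 1, e 0]).toLinearMap ∘ₗ homogenizeLM n

@[simp]
lemma conicPoint_apply {R : Type} [CommSemiring R] (x : R) (i : Fin 3) :
    conicPoint e x (e i) = ![1, x, x ^ 2] i :=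
  e.injective.extend_apply _ _ i

@[simp]
lemma tangentPoint_apply (y : K) (i : Fin 3) : tangentPoint e y (e i) = ![1, y, 0] i :=
  e.injective.extend_apply _ _ i

lemma conicPoint_ne_zero (x : K) : conicPoint e x ≠ 0 :=
  Function.ne_iff.2 ⟨e 0, by simp⟩

lemma tangentPoint_ne_zero (y : K) : tangentPoint e y ≠ 0 :=
  Function.ne_iff.2 ⟨e 0, by simp⟩

@[simp]
lemma conicRestrict_X (i : Fin 3) :
    conicRestrict e (MvPolynomial.X (e i) : PR K m) = ![1, X, X ^ 2] i := by
  simp [conicRestrict]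

lemma eval_conicPoint_X (x : K) (i : Fin (m + 1)) :
    (conicPoint e (X : K[X]) i).eval x = conicPoint e x i := by
  by_cases hi : ∃ j, e j = i
  · obtain ⟨j, rfl⟩ := hi
    fin_cases j <;> simp
  · simp [conicPoint, Function.extend_apply' _ _ _ hi]

lemma natDegree_conicPoint_X_le (i : Fin (m + 1)) : (conicPoint e (X : K[X]) i).natDegree ≤ 2 := by
  by_cases hi : ∃ j, e j = i
  · obtain ⟨j, rfl⟩ := hi
    fin_cases j <;> simp
  · simp [conicPoint, Function.extend_apply' _ _ _ hi]

lemma eval_conicRestrict (x : K) (f : PR K m) :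
    (conicRestrict e f).eval x = MvPolynomial.eval (conicPoint e x) f := by
  induction f using MvPolynomial.induction_on with
  | C a => simp [conicRestrict]
  | add f g ihf ihg => simp [ihf, ihg]
  | mul_X f i ihf =>
    rw [map_mul, eval_mul, ihf, map_mul, conicRestrict, MvPolynomial.aeval_X, eval_conicPoint_X,
      MvPolynomial.eval_X]

lemma natDegree_conicRestrict_le {f : PR K m} (hf : f ∈ Hd K m d) :
    (conicRestrict e f).natDegree ≤ 2 * d := by
  rw [mul_comm]
  exact MvPolynomial.aeval_natDegree_le f (MvPolynomial.IsHomogeneous.totalDegree_le hf) _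
    natDegree_conicPoint_X_le

lemma exists_conicRestrict_eq_X_pow {i : ℕ} (hi : i ≤ 2 * n) :
    ∃ f ∈ Hd K m n, conicRestrict e f = X ^ i := by
  have hpow (j : Fin 3) (a : ℕ) : (MvPolynomial.X (e j) ^ a : PR K m).IsHomogeneous a := by
    simpa using (MvPolynomial.isHomogeneous_X K (e j)).pow a
  obtain ⟨a, rfl⟩ := Nat.exists_eq_add_of_le' (show i % 2 + i / 2 ≤ n by omega)
  refine ⟨MvPolynomial.X (e 0) ^ a *
    (MvPolynomial.X (e 1) ^ (i % 2) * MvPolynomial.X (e 2) ^ (i / 2)), ?_, ?_⟩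
  · exact (hpow 0 _).mul ((hpow 1 _).mul (hpow 2 _))
  · simp [← pow_mul, ← pow_add, Nat.mod_add_div]

lemma binaryForm_mem_Hd (p : K[X]) : binaryForm e n p ∈ Hd K m n :=
  (isHomogeneous_homogenize p).rename_isHomogeneous

lemma conicRestrict_binaryForm (hp : p.natDegree ≤ n) : conicRestrict e (binaryForm e n p) = p := by
  have hhom := aeval_homogenize_of_eq_one hp
    (g := (conicPoint e (X : K[X])) ∘ ![e 1, e 0]) (by simp)
  simpa [binaryForm, conicRestrict, MvPolynomial.aeval_rename] using hhom

lemma eval_binaryForm {v : Fin (m + 1) → K} (hv : v (e 0) ≠ 0) (hp : p.natDegree ≤ n) :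
    MvPolynomial.eval v (binaryForm e n p) = p.eval (v (e 1) / v (e 0)) * v (e 0) ^ n := by
  simpa [binaryForm, MvPolynomial.eval_rename] using eval_homogenize hp (v ∘ ![e 1, e 0]) hv

lemma eval_binaryForm_of_eq_zero {v : Fin (m + 1) → K} (hv : v (e 0) = 0) (hp : p.natDegree < n) :
    MvPolynomial.eval v (binaryForm e n p) = 0 := by
  obtain ⟨k, rfl⟩ : ∃ k, n = 1 + k := ⟨n - 1, by omega⟩
  have hmul : p.homogenize (1 + k) = MvPolynomial.X 1 * p.homogenize k := by
    simpa using homogenize_mul 1 p (m := 1) (n := k) (by simp) (by omega)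
  simp [binaryForm, hmul, hv]

lemma eval_tangentPoint_binaryForm (y : K) (hp : p.natDegree ≤ n) :
    MvPolynomial.eval (tangentPoint e y) (binaryForm e n p) = p.eval y := by
  have h0 : tangentPoint e y (e 0) = 1 := tangentPoint_apply y 0
  have h1 : tangentPoint e y (e 1) = y := tangentPoint_apply y 1
  rw [eval_binaryForm (h0 ▸ one_ne_zero) hp, h0, h1, div_one, one_pow, mul_one]

end Conic

section Functional

variable {e : Fin 3 ↪ Fin (m + 1)} {n N a : ℕ} {x ω : K} {Y : Finset K}

/-- The functional sending a form to the coefficient of `X ^ i` in its restriction to the conic. -/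
def conicCoeff (e : Fin 3 ↪ Fin (m + 1)) (d i : ℕ) : Module.Dual K (Hd K m d) :=
  lcoeff K i ∘ₗ (conicRestrict e).toLinearMap ∘ₗ (Hd K m d).subtype

/-- A functional in the span of the subscheme of length `n + 1` of the conic supported at
`(1 : 0 : 0)` and of the points `(1 : y : 0)`, `y ∈ Y`, of the tangent line to the conic there.
Its class has border rank `n + 1 + #Y` and symmetric rank `2 * d + 1 - n + #Y`. -/
def conicTangentFunctional (e : Fin 3 ↪ Fin (m + 1)) (d n : ℕ) (Y : Finset K) :
    Module.Dual K (Hd K m d) :=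
  conicCoeff e d n + ∑ y ∈ Y, nu d (tangentPoint e y)

lemma conicCoeff_apply (i : ℕ) (f : Hd K m d) :
    conicCoeff e d i f = (conicRestrict e (f : PR K m)).coeff i := rfl

lemma conicTangentFunctional_apply (f : Hd K m d) :
    conicTangentFunctional e d n Y f = (conicRestrict e (f : PR K m)).coeff n +
      ∑ y ∈ Y, MvPolynomial.eval (tangentPoint e y) (f : PR K m) := by
  simp [conicTangentFunctional, conicCoeff_apply, nu_apply]

lemma nu_conicPoint (x : K) :
    nu d (conicPoint e x) = ∑ i ∈ Finset.range (2 * d + 1), x ^ i • conicCoeff e d i := by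
  ext f
  rw [nu_apply, ← eval_conicRestrict,
    eval_eq_sum_range' (Nat.lt_succ_of_le (natDegree_conicRestrict_le f.2))]
  simp [conicCoeff_apply, mul_comm]

lemma sum_pow_mul_eq_ite_of_isPrimitiveRoot (hω : IsPrimitiveRoot ω N) (i : ℕ) :
    ∑ j ∈ Finset.range N, ω ^ (j * i) = if N ∣ i then (N : K) else 0 := by
  split_ifs with hi
  · simp [mul_comm _ i, pow_mul, (hω.pow_eq_one_iff_dvd i).2 hi]
  · have hne : ω ^ i ≠ 1 := fun h => hi ((hω.pow_eq_one_iff_dvd i).1 h)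
    have hpow : (ω ^ i) ^ N = 1 := by rw [← pow_mul, mul_comm, pow_mul, hω.pow_eq_one, one_pow]
    simp only [mul_comm _ i, pow_mul]
    rw [geom_sum_eq hne, hpow, sub_self, zero_div]

lemma sum_rootsOfUnity_smul_nu (hω : IsPrimitiveRoot ω N) (a : ℕ) (x : K) :
    ∑ j ∈ Finset.range N, ω ^ (j * a) • nu d (conicPoint e (ω ^ j * x)) =
      (N : K) • ∑ i ∈ Finset.range (2 * d + 1) with N ∣ i + a, x ^ i • conicCoeff e d i := by
  simp only [nu_conicPoint, Finset.smul_sum, smul_smul]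
  rw [Finset.sum_comm, Finset.sum_filter]
  refine Finset.sum_congr rfl fun i _ => ?_
  have hterm (j : ℕ) : ω ^ (j * a) * (ω ^ j * x) ^ i = ω ^ (j * (i + a)) * x ^ i := by ring
  simp only [hterm, ← Finset.sum_smul, ← Finset.sum_mul,
    sum_pow_mul_eq_ite_of_isPrimitiveRoot hω, ite_mul, zero_mul, ite_smul, zero_smul]

lemma symRankLE_sum_conicCoeff (hω : IsPrimitiveRoot ω N) (hN : 0 < N) (a : ℕ) (x : K) :
    SymRankLE (K := K)
      (∑ i ∈ Finset.range (2 * d + 1) with N ∣ i + a, x ^ i • conicCoeff e d i) N := by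
  have : NeZero N := .of_pos hN
  have hsum : SymRankLE ((N : K)⁻¹ • ∑ j ∈ Finset.range N,
      ω ^ (j * a) • nu d (conicPoint e (ω ^ j * x))) (Finset.range N).card :=
    (symRankLE_sum_smul_nu _ _ fun _ => conicPoint_ne_zero _).smul _
  rwa [sum_rootsOfUnity_smul_nu hω, inv_smul_smul₀ hω.neZero'.ne, Finset.card_range] at hsum

lemma symRankLE_sum_nu_tangentPoint (Y : Finset K) :
    SymRankLE (∑ y ∈ Y, nu d (tangentPoint e y)) Y.card := by
  simpa using symRankLE_sum_smul_nu Y (fun _ => (1 : K)) (tangentPoint_ne_zero (e := e))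

lemma symRankLE_conicTangentFunctional (hω : IsPrimitiveRoot ω (2 * d + 1 - n)) (hnd : n ≤ d) :
    SymRankLE (conicTangentFunctional e d n Y) (2 * d + 1 - n + Y.card) := by
  refine SymRankLE.add ?_ (symRankLE_sum_nu_tangentPoint Y)
  have hfilter :
      {i ∈ Finset.range (2 * d + 1) | 2 * d + 1 - n ∣ i + (2 * d + 1 - n - n)} = {n} := by
    ext i
    simp only [Finset.mem_filter, Finset.mem_range, Finset.mem_singleton]
    constructor
    · rintro ⟨hi, hdvd⟩
      have := Nat.eq_of_dvd_of_lt_two_mul (by omega) hdvd (by omega)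
      omega
    · rintro rfl
      exact ⟨by omega, 1, by omega⟩
  simpa only [hfilter, Finset.sum_singleton, one_pow, one_smul] using
    symRankLE_sum_conicCoeff (e := e) (d := d) hω (by omega) (2 * d + 1 - n - n) 1

lemma mk_conicTangentFunctional_mem_secantWrt [Infinite K] (hω : IsPrimitiveRoot ω (n + 1))
    (hnd : n ≤ 2 * d) (h0 : conicTangentFunctional e d n Y ≠ 0) :
    Projectivization.mk K _ h0 ∈ secantWrt (XSet K m d) (n + 1 + Y.card) := by
  let I := {i ∈ Finset.range (2 * d + 1) | n + 1 ∣ i + 1}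
  let γ (x : K) := ∑ i ∈ I, x ^ (i - n) • conicCoeff e d i + ∑ y ∈ Y, nu d (tangentPoint e y)
  have hle : ∀ i ∈ I, n ≤ i := fun i hi =>
    Nat.le_of_succ_le_succ (Nat.le_of_dvd i.succ_pos (Finset.mem_filter.1 hi).2)
  have hγ0 : γ 0 = conicTangentFunctional e d n Y := by
    have hn : n ∈ I := Finset.mem_filter.2 ⟨Finset.mem_range.2 (by omega), dvd_rfl⟩
    refine congrArg (· + _) ?_
    rw [Finset.sum_eq_single_of_mem n hn fun i hi hin => ?_, Nat.sub_self, pow_zero, one_smul]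
    rw [zero_pow (Nat.sub_ne_zero_of_lt ((hle i hi).lt_of_ne' hin)), zero_smul]
  have hγ (ℓ : Module.Dual K (Module.Dual K (Hd K m d))) :
      ∃ p : K[X], ∀ x, ℓ (γ x) = p.eval x :=
    ⟨∑ i ∈ I, C (ℓ (conicCoeff e d i)) * X ^ (i - n) +
      C (ℓ (∑ y ∈ Y, nu d (tangentPoint e y))), fun x => by
        simp only [γ, map_add, map_sum ℓ _ I, map_smul, smul_eq_mul, eval_add, eval_finsetSum,
          eval_mul, eval_pow, eval_X, eval_C, mul_comm]⟩
  have hrank : ∀ x ≠ 0, SymRankLE (γ x) (n + 1 + Y.card) := fun x hx => by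
    refine SymRankLE.add ?_ (symRankLE_sum_nu_tangentPoint Y)
    convert (symRankLE_sum_conicCoeff (e := e) (d := d) hω n.succ_pos 1 x).smul (x ^ n)⁻¹ using 1
    rw [Finset.smul_sum]
    refine Finset.sum_congr rfl fun i hi => ?_
    rw [smul_smul, pow_sub₀ x hx (hle i hi), mul_comm]
  simpa only [hγ0] using mk_mem_secantWrt_of_curve (by omega) hγ hrank (hγ0 ▸ h0)

end Functional

section BorderRank

variable {e : Fin 3 ↪ Fin (m + 1)} {n : ℕ} {Y : Finset K} {p q : K[X]}

lemma eq_zero_of_forall_coeff_add_sum_eval_mul_eq_zero (hY : 0 ∉ Y) (hp : p.natDegree ≤ n + Y.card)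
    (h : ∀ q : K[X], q.natDegree ≤ n + Y.card → (p * q).coeff n + ∑ y ∈ Y, (p * q).eval y = 0) :
    p = 0 := by
  classical
  have hY0 {y : K} (hy : y ∈ Y) : y ≠ 0 := ne_of_mem_of_not_mem hy hY
  have heval : ∀ y ∈ Y, p.eval y = 0 := fun y hy => by
    obtain ⟨q, hq, hX, hqZ, hqy⟩ :=
      exists_X_pow_dvd_eval_eq_zero (Y.erase y) (n + 1) (hY0 hy) (Finset.notMem_erase y Y)
    have hcoeff : (p * q).coeff n = 0 := X_pow_dvd_iff.1 (hX.mul_left p) n n.lt_succ_self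
    have := Finset.card_erase_add_one hy
    have hpq := h q (by omega)
    rw [hcoeff, zero_add, Finset.sum_eq_single_of_mem y hy fun z hz hzy => by
      rw [eval_mul, hqZ z (Finset.mem_erase.2 ⟨hzy, hz⟩), mul_zero], eval_mul] at hpq
    exact (mul_eq_zero.1 hpq).resolve_right hqy
  have hcoeff : ∀ i < n + 1, p.coeff i = 0 := fun i hi => by
    have hX := h (X ^ (n - i)) (by rw [natDegree_X_pow]; omega)
    rwa [Finset.sum_eq_zero fun y hy => by rw [eval_mul, heval y hy, zero_mul], add_zero,
      coeff_mul_X_pow', if_pos (n.sub_le i), Nat.sub_sub_self (Nat.le_of_lt_succ hi)] at hX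
  obtain ⟨g, rfl⟩ := X_pow_dvd_iff.2 hcoeff
  by_contra! hg
  rw [natDegree_X_pow_mul _ (right_ne_zero_of_mul hg)] at hp
  refine right_ne_zero_of_mul hg
    (eq_zero_of_natDegree_lt_card_of_eval_eq_zero' g Y (fun y hy => ?_) (by omega))
  have hgy := heval y hy
  rw [eval_mul, eval_pow, eval_X] at hgy
  exact (mul_eq_zero.1 hgy).resolve_left (pow_ne_zero _ (hY0 hy))

lemma conicTangentFunctional_binaryForm_mul {a b : ℕ} (hp : p.natDegree ≤ a) (hq : q.natDegree ≤ b)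
    (h : binaryForm e a p * binaryForm e b q ∈ Hd K m d) :
    conicTangentFunctional e d n Y ⟨_, h⟩ = (p * q).coeff n + ∑ y ∈ Y, (p * q).eval y := by
  simp only [conicTangentFunctional_apply, map_mul, conicRestrict_binaryForm hp,
    conicRestrict_binaryForm hq, eval_tangentPoint_binaryForm _ hp,
    eval_tangentPoint_binaryForm _ hq, eval_mul]

lemma det_catalecticant_conicTangentFunctional_ne_zero {a b : ℕ} (hY : 0 ∉ Y)
    (ha : n + Y.card ≤ a) (hb : n + Y.card ≤ b)
    (hfg : ∀ i j : Fin (n + Y.card + 1),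
      binaryForm e a (X ^ (i : ℕ)) * binaryForm e b (X ^ (j : ℕ)) ∈ Hd K m d) :
    (catalecticant hfg (conicTangentFunctional e d n Y)).det ≠ 0 := by
  let W := degreeLT K (n + Y.card + 1)
  let T : K[X] →ₗ[K] K := lcoeff K n + ∑ y ∈ Y, leval y
  let B : LinearMap.BilinForm K W :=
    ((LinearMap.mul K K[X]).compr₂ T).domRestrict₁₂ W W
  have hB (p q : W) : B p q = (p * q : K[X]).coeff n + ∑ y ∈ Y, (p * q : K[X]).eval y := by
    change T (p * q) = _
    simp [T]
  have hmatrix : catalecticant hfg (conicTangentFunctional e d n Y) =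
      LinearMap.BilinForm.toMatrix (degreeLT.basis K _) B := by
    ext i j
    rw [LinearMap.BilinForm.toMatrix_apply, hB, degreeLT.basis_val, degreeLT.basis_val]
    exact conicTangentFunctional_binaryForm_mul ((natDegree_X_pow_le _).trans (by omega))
      ((natDegree_X_pow_le _).trans (by omega)) _
  rw [hmatrix, ← LinearMap.BilinForm.nondegenerate_iff_det_ne_zero]
  refine .ofSeparatingLeft fun p hp => Subtype.ext ?_
  exact eq_zero_of_forall_coeff_add_sum_eval_mul_eq_zero hY
    (mem_degreeLT_succ_iff.1 p.2) fun q hq =>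
      (hB p ⟨q, mem_degreeLT_succ_iff.2 hq⟩).symm.trans (hp _)

lemma binaryForm_mul_mem_Hd {a b : ℕ} (hab : a + b = d) (p q : K[X]) :
    binaryForm e a p * binaryForm e b q ∈ Hd K m d :=
  hab ▸ (binaryForm_mem_Hd p).mul (binaryForm_mem_Hd q)

lemma conicTangentFunctional_ne_zero (hY : 0 ∉ Y) (hd : 2 * (n + Y.card) ≤ d) :
    conicTangentFunctional e d n Y ≠ 0 := fun h => by
  obtain ⟨b, hb⟩ := Nat.exists_eq_add_of_le (show n + Y.card ≤ d by omega)
  refine det_catalecticant_conicTangentFunctional_ne_zero (e := e) hY le_rfl (b := b) (by omega)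
    (fun _ _ => binaryForm_mul_mem_Hd hb.symm _ _) ?_
  rw [h]
  exact det_catalecticant_eq_zero (n := 0) _ ⟨∅, by simp⟩ (by simp)

lemma brank_mk_conicTangentFunctional [Infinite K] {ω : K} (hω : IsPrimitiveRoot ω (n + 1))
    (hY : 0 ∉ Y) (hd : 2 * (n + Y.card) ≤ d) (h0 : conicTangentFunctional e d n Y ≠ 0) :
    brank d (Projectivization.mk K _ h0) = n + 1 + Y.card := by
  obtain ⟨b, hb⟩ := Nat.exists_eq_add_of_le (show n + Y.card ≤ d by omega)
  have hfg (i j : Fin (n + Y.card + 1)) :=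
    binaryForm_mul_mem_Hd (e := e) hb.symm (X ^ (i : ℕ) : K[X]) (X ^ (j : ℕ))
  have hdet := det_catalecticant_conicTangentFunctional_ne_zero hY le_rfl (by omega) hfg
  refine IsLeast.csInf_eq ⟨⟨by omega, ?_⟩, fun s hs => ?_⟩
  · exact mk_conicTangentFunctional_mem_secantWrt hω (by omega) h0
  · have hle := card_le_of_mk_mem_secantWrt hfg hdet h0 hs.1 hs.2
    rw [Fintype.card_fin] at hle
    omega

end BorderRank

section HilbertFunction

variable {e : Fin 3 ↪ Fin (m + 1)} {t : ℕ} {A : Finset (Pm K m)}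

/-- Evaluation of the forms of degree `t` at the chosen representatives of a finite set of
points. -/
def evalForms (A : Finset (Pm K m)) (t : ℕ) : Hd K m t →ₗ[K] (A → K) :=
  LinearMap.pi fun a => nu t a.1.rep

/-- The Hilbert function of a finite set of points: the number of independent conditions it
imposes on the forms of degree `t`. -/
def hilbertFunction (A : Finset (Pm K m)) (t : ℕ) : ℕ :=
  Module.finrank K (LinearMap.range (evalForms A t))

lemma evalForms_apply (f : Hd K m t) (a : A) :
    evalForms A t f a = MvPolynomial.eval a.1.rep (f : PR K m) :=
  nu_apply _ f

lemma hilbertFunction_le_card (A : Finset (Pm K m)) (t : ℕ) : hilbertFunction A t ≤ A.card :=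
  (Submodule.finrank_le _).trans (by simp)

lemma hilbertFunction_zero_pos (hA : A.Nonempty) : 0 < hilbertFunction A 0 := by
  obtain ⟨a, ha⟩ := hA
  refine Submodule.one_le_finrank_iff.2 fun hbot => ?_
  have hone : evalForms A 0 ⟨1, MvPolynomial.isHomogeneous_one _ _⟩ = 0 :=
    LinearMap.congr_fun (LinearMap.range_eq_bot.1 hbot) _
  simpa [evalForms_apply] using congrFun hone ⟨a, ha⟩

lemma X_mul_add_binaryForm_mem_Hd {f : PR K m} (hf : f ∈ Hd K m t) (p : K[X]) :
    MvPolynomial.X (e 2) * f + binaryForm e (t + 1) p ∈ Hd K m (t + 1) :=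
  add_mem (by simpa [add_comm] using (MvPolynomial.isHomogeneous_X K (e 2)).mul hf)
    (binaryForm_mem_Hd p)

lemma hilbertFunction_add_finrank_le (hA : ∀ a ∈ A, a.rep (e 2) ≠ 0) (W : Submodule K K[X])
    [FiniteDimensional K W]
    (hW : ∀ p ∈ W, ∀ f ∈ Hd K m t, (∀ a ∈ A, MvPolynomial.eval a.rep
      (MvPolynomial.X (e 2) * f + binaryForm e (t + 1) p) = 0) → p = 0) :
    hilbertFunction A t + Module.finrank K W ≤ hilbertFunction A (t + 1) := by
  let V := LinearMap.range (evalForms A t)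
  let mulX : (A → K) →ₗ[K] (A → K) := LinearMap.mulLeft K fun a => a.1.rep (e 2)
  let evalBinary : K[X] →ₗ[K] (A → K) := evalForms A (t + 1) ∘ₗ
    (binaryForm e (t + 1)).codRestrict (Hd K m (t + 1)) binaryForm_mem_Hd
  let Ψ : V × W →ₗ[K] (A → K) := (mulX ∘ₗ V.subtype).coprod (evalBinary ∘ₗ W.subtype)
  have hΨ (f : Hd K m t) (p : W) (a : A) : Ψ (⟨_, f, rfl⟩, p) a = MvPolynomial.eval a.1.rep
      (MvPolynomial.X (e 2) * (f : PR K m) + binaryForm e (t + 1) (p : K[X])) := by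
    simp [Ψ, mulX, evalBinary, evalForms_apply]
  have hrange (x) : Ψ x ∈ LinearMap.range (evalForms A (t + 1)) := by
    obtain ⟨⟨_, f, rfl⟩, p⟩ := x
    exact ⟨⟨_, X_mul_add_binaryForm_mem_Hd f.2 p⟩,
      funext fun a => (evalForms_apply _ a).trans (hΨ f p a).symm⟩
  have hinj : Function.Injective (Ψ.codRestrict _ hrange) := by
    refine (injective_iff_map_eq_zero _).2 ?_
    rintro ⟨⟨_, f, rfl⟩, p⟩ hfp
    have heval (a : A) := (hΨ f p a).symm.trans (congrFun (congrArg Subtype.val hfp) a)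
    have hp : p = 0 := Subtype.ext (hW p p.2 f f.2 fun a ha => heval ⟨a, ha⟩)
    subst hp
    refine Prod.ext (Subtype.ext (funext fun a => ?_)) rfl
    simpa [evalForms_apply, hA a.1 a.2] using heval a
  simpa [Module.finrank_prod, hilbertFunction] using
    LinearMap.finrank_le_finrank_of_injective hinj

end HilbertFunction

section RankLowerBound

variable {e : Fin 3 ↪ Fin (m + 1)} {n t i : ℕ} {S : Finset (Pm K m)} {Y : Finset K} {p : K[X]}
  {f g : PR K m}

lemma apply_eq_zero_of_mem_dualSpan {φ : Module.Dual K (Hd K m d)} {S : Set (Pm K m)}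
    (hφ : φ ∈ dualSpan d S) {f : Hd K m d}
    (hf : ∀ a ∈ S, MvPolynomial.eval a.rep (f : PR K m) = 0) : φ f = 0 := by
  refine Submodule.span_induction ?_ rfl (fun φ ψ _ _ hφ hψ => ?_) (fun c φ _ hφ => ?_) hφ
  · rintro _ ⟨a, ha, rfl⟩
    exact (nu_apply _ _).trans (hf a ha)
  · rw [LinearMap.add_apply, hφ, hψ, add_zero]
  · rw [LinearMap.smul_apply, hφ, smul_zero]

lemma coeff_conicRestrict_eq_zero (hS : conicTangentFunctional e d n Y ∈ dualSpan d (S : Set _))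
    (hg : g ∈ Hd K m t) (hgS : ∀ a ∈ S, a.rep (e 2) ≠ 0 → MvPolynomial.eval a.rep g = 0)
    (hin : i + 2 ≤ n) (htd : n + 2 * t ≤ i + 2 * d) : (conicRestrict e g).coeff i = 0 := by
  obtain ⟨c, rfl⟩ : ∃ c, d = t + c + 1 := ⟨d - t - 1, by omega⟩
  obtain ⟨f, hf, hfX⟩ := exists_conicRestrict_eq_X_pow (K := K) (e := e)
    (show n - 2 - i ≤ 2 * c by omega)
  have hrestrict : conicRestrict e (g * f * MvPolynomial.X (e 2)) =
      conicRestrict e g * X ^ (n - i) := by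
    rw [map_mul, map_mul, hfX, conicRestrict_X, mul_assoc, show n - i = n - 2 - i + 2 by omega,
      pow_add]
    rfl
  have hmem := (hg.mul hf).mul (MvPolynomial.isHomogeneous_X K (e 2))
  have hzero := apply_eq_zero_of_mem_dualSpan hS (f := ⟨_, hmem⟩) fun a ha => by
    by_cases ha2 : a.rep (e 2) = 0 <;> simp [ha2, hgS a ha]
  rw [conicTangentFunctional_apply, hrestrict, coeff_mul_X_pow', if_pos (n.sub_le i),
    Nat.sub_sub_self (by omega)] at hzero
  simpa using hzero

lemma conicRestrict_X_mul_add_binaryForm (f : PR K m) (hp : p.natDegree ≤ t) :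
    conicRestrict e (MvPolynomial.X (e 2) * f + binaryForm e t p) =
      X ^ 2 * conicRestrict e f + p := by
  rw [map_add, map_mul, conicRestrict_X, conicRestrict_binaryForm hp]
  rfl

lemma coeff_eq_zero_of_eval_X_mul_add_binaryForm_eq_zero
    (hS : conicTangentFunctional e d n Y ∈ dualSpan d (S : Set _)) (hp : p.natDegree ≤ t + 1)
    (hf : f ∈ Hd K m t) (hfp : ∀ a ∈ S, a.rep (e 2) ≠ 0 → MvPolynomial.eval a.rep
      (MvPolynomial.X (e 2) * f + binaryForm e (t + 1) p) = 0)
    (hi : i < 2) (hin : i + 2 ≤ n) (htd : n + 2 * (t + 1) ≤ i + 2 * d) : p.coeff i = 0 := by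
  have hcoeff := coeff_conicRestrict_eq_zero hS (X_mul_add_binaryForm_mem_Hd hf p) hfp hin htd
  rwa [conicRestrict_X_mul_add_binaryForm f hp, coeff_add, coeff_X_pow_mul', if_neg hi.not_ge,
    zero_add] at hcoeff

lemma sum_eval_tangentPoint_mul_eval_eq_zero {q : K[X]}
    (hS : conicTangentFunctional e d n Y ∈ dualSpan d (S : Set _)) (hg : g ∈ Hd K m t)
    (hgS : ∀ a ∈ S, a.rep (e 2) ≠ 0 → MvPolynomial.eval a.rep g = 0) (htd : n + 2 * t ≤ 2 * d)
    (hqd : t + q.natDegree < d) (hX : X ^ 2 ∣ q)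
    (hq : ∀ a ∈ S, a.rep (e 2) = 0 → q.eval (a.rep (e 1) / a.rep (e 0)) = 0) :
    ∑ y ∈ Y, MvPolynomial.eval (tangentPoint e y) g * q.eval y = 0 := by
  obtain ⟨c, rfl⟩ : ∃ c, d = t + c := ⟨d - t, by omega⟩
  have hqc : q.natDegree < c := by omega
  have hmem : g * binaryForm e c q ∈ Hd K m (t + c) := hg.mul (binaryForm_mem_Hd q)
  have hzero := apply_eq_zero_of_mem_dualSpan hS (f := ⟨_, hmem⟩) fun a ha => by
    rw [map_mul]
    by_cases ha2 : a.rep (e 2) = 0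
    · by_cases ha0 : a.rep (e 0) = 0
      · rw [eval_binaryForm_of_eq_zero ha0 hqc, mul_zero]
      · rw [eval_binaryForm ha0 hqc.le, hq a ha ha2, zero_mul, mul_zero]
    · rw [hgS a ha ha2, zero_mul]
  have hcoeff : (conicRestrict e g * q).coeff n = 0 := by
    have hdvd : X ^ (n - 1) ∣ conicRestrict e g := X_pow_dvd_iff.2 fun i hi =>
      coeff_conicRestrict_eq_zero hS hg hgS (by omega) (by omega)
    have hmul := mul_dvd_mul hdvd hX
    rw [← pow_add] at hmul
    exact X_pow_dvd_iff.1 hmul n (by omega)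
  simpa only [conicTangentFunctional_apply, map_mul, conicRestrict_binaryForm hqc.le, hcoeff,
    zero_add, eval_tangentPoint_binaryForm _ hqc.le] using hzero

lemma eq_zero_of_eval_X_mul_add_binaryForm_eq_zero [DecidableEq K]
    (hS : conicTangentFunctional e d n Y ∈ dualSpan d (S : Set _)) (hp : p.natDegree ≤ 2)
    (hf : f ∈ Hd K m t) (hfp : ∀ a ∈ S, a.rep (e 2) ≠ 0 → MvPolynomial.eval a.rep
      (MvPolynomial.X (e 2) * f + binaryForm e (t + 1) p) = 0)
    (hY : 0 ∉ Y) (hn : 3 ≤ n) (hd : 2 * (n + Y.card) ≤ d) (ht : 1 ≤ t)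
    (htY : t + {a ∈ S | a.rep (e 2) = 0}.card ≤ Y.card) : p = 0 := by
  let slopes := {a ∈ S | a.rep (e 2) = 0}.image fun a => a.rep (e 1) / a.rep (e 0)
  have hslopes : t + slopes.card ≤ Y.card := (Nat.add_le_add_left Finset.card_image_le t).trans htY
  obtain ⟨y, hy, hyB⟩ : ∃ y ∈ Y, y ∉ slopes :=
    Finset.exists_mem_notMem_of_card_lt_card (by omega)
  have hy0 : y ≠ 0 := ne_of_mem_of_not_mem hy hY
  obtain ⟨q, hqd, hX, hqZ, hqy⟩ := exists_X_pow_dvd_eval_eq_zero (Y.erase y ∪ slopes) 2 hy0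
    (by simp [hyB])
  have hqd' : q.natDegree + 1 ≤ Y.card + slopes.card + 2 := by
    have := Finset.card_union_le (Y.erase y) slopes
    have := Finset.card_erase_add_one hy
    omega
  have hsum := sum_eval_tangentPoint_mul_eval_eq_zero hS (X_mul_add_binaryForm_mem_Hd hf p) hfp
    (by omega) (by omega) hX fun a ha ha2 => hqZ _ (Finset.mem_union_right _
      (Finset.mem_image_of_mem _ (Finset.mem_filter.2 ⟨ha, ha2⟩)))
  rw [Finset.sum_eq_single_of_mem y hy fun z hz hzy => by
    rw [hqZ z (Finset.mem_union_left _ (Finset.mem_erase.2 ⟨hzy, hz⟩)), mul_zero]] at hsum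
  have hpy : p.eval y = 0 := by
    have hgy := (mul_eq_zero.1 hsum).resolve_right hqy
    simpa [eval_tangentPoint_binaryForm y (hp.trans (Nat.succ_le_succ ht))] using hgy
  have hcoeff : ∀ i < 2, p.coeff i = 0 := fun i hi =>
    coeff_eq_zero_of_eval_X_mul_add_binaryForm_eq_zero hS (hp.trans (by omega)) hf hfp hi
      (by omega) (by omega)
  obtain ⟨c, rfl⟩ := X_pow_dvd_iff.2 hcoeff
  by_contra! hc
  rw [natDegree_X_pow_mul _ (right_ne_zero_of_mul hc)] at hp
  obtain ⟨a, rfl⟩ := natDegree_eq_zero.1 (show c.natDegree = 0 by omega)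
  simp_all

lemma hilbertFunction_filter_add_one_le [DecidableEq K]
    (hS : conicTangentFunctional e d n Y ∈ dualSpan d (S : Set _)) (hn : 3 ≤ n)
    (htd : n + 2 * (t + 1) ≤ 2 * d + 1) :
    hilbertFunction {a ∈ S | a.rep (e 2) ≠ 0} t + 1 ≤
      hilbertFunction {a ∈ S | a.rep (e 2) ≠ 0} (t + 1) := by
  refine (Nat.add_le_add_left (finrank_span_singleton X_ne_zero).ge _).trans
    (hilbertFunction_add_finrank_le (fun a ha => (Finset.mem_filter.1 ha).2) _
      fun p hp f hf hfp => ?_)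
  obtain ⟨c, rfl⟩ := Submodule.mem_span_singleton.1 hp
  have hdeg : (c • X : K[X]).natDegree ≤ t + 1 :=
    (natDegree_smul_le _ _).trans (natDegree_X_le.trans (by omega))
  have hc := coeff_eq_zero_of_eval_X_mul_add_binaryForm_eq_zero hS hdeg hf
    (fun a ha ha2 => hfp a (Finset.mem_filter.2 ⟨ha, ha2⟩)) one_lt_two hn (by omega)
  rw [coeff_smul, coeff_X_one, smul_eq_mul, mul_one] at hc
  rw [hc, zero_smul]

lemma hilbertFunction_filter_add_two_le [DecidableEq K]
    (hS : conicTangentFunctional e d n Y ∈ dualSpan d (S : Set _)) (hn : 3 ≤ n)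
    (htd : n + 2 * (t + 1) ≤ 2 * d) :
    hilbertFunction {a ∈ S | a.rep (e 2) ≠ 0} t + 2 ≤
      hilbertFunction {a ∈ S | a.rep (e 2) ≠ 0} (t + 1) := by
  refine (Nat.add_le_add_left (finrank_degreeLT 2).ge _).trans (hilbertFunction_add_finrank_le
    (fun a ha => (Finset.mem_filter.1 ha).2) _ fun p hp f hf hfp => ?_)
  have hdeg : p.natDegree ≤ 1 := mem_degreeLT_succ_iff.1 hp
  ext i
  obtain hi | hi := lt_or_ge i 2
  · exact coeff_eq_zero_of_eval_X_mul_add_binaryForm_eq_zero hS (by omega) hf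
      (fun a ha ha2 => hfp a (Finset.mem_filter.2 ⟨ha, ha2⟩)) hi (by omega) (by omega)
  · exact coeff_eq_zero_of_natDegree_lt (hdeg.trans_lt hi)

lemma hilbertFunction_filter_add_three_le [DecidableEq K]
    (hS : conicTangentFunctional e d n Y ∈ dualSpan d (S : Set _)) (hY : 0 ∉ Y) (hn : 3 ≤ n)
    (hd : 2 * (n + Y.card) ≤ d) (ht : 1 ≤ t)
    (htY : t + {a ∈ S | a.rep (e 2) = 0}.card ≤ Y.card) :
    hilbertFunction {a ∈ S | a.rep (e 2) ≠ 0} t + 3 ≤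
      hilbertFunction {a ∈ S | a.rep (e 2) ≠ 0} (t + 1) := by
  refine (Nat.add_le_add_left (finrank_degreeLT 3).ge _).trans (hilbertFunction_add_finrank_le
    (fun a ha => (Finset.mem_filter.1 ha).2) _ fun p hp f hf hfp => ?_)
  exact eq_zero_of_eval_X_mul_add_binaryForm_eq_zero hS (mem_degreeLT_succ_iff.1 hp) hf
    (fun a ha ha2 => hfp a (Finset.mem_filter.2 ⟨ha, ha2⟩)) hY hn hd ht htY

lemma add_min_le_hilbertFunction_filter [DecidableEq K]
    (hS : conicTangentFunctional e d n Y ∈ dualSpan d (S : Set _)) (hY : 0 ∉ Y) (hn : 3 ≤ n)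
    (hd : 2 * (n + Y.card) ≤ d) (htd : n + 2 * t ≤ 2 * d) :
    1 + 2 * t + min (t - 1) (Y.card - {a ∈ S | a.rep (e 2) = 0}.card) ≤
      hilbertFunction {a ∈ S | a.rep (e 2) ≠ 0} t := by
  induction t with
  | zero =>
    have hne : {a ∈ S | a.rep (e 2) ≠ 0}.Nonempty := by
      by_contra hempty
      rw [Finset.not_nonempty_iff_eq_empty, Finset.filter_eq_empty_iff] at hempty
      have hone := coeff_conicRestrict_eq_zero (g := 1) (i := 0) hS
        (MvPolynomial.isHomogeneous_one _ _) (fun a ha ha2 => (hempty ha ha2).elim) (by omega)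
        (by omega)
      simp at hone
    have := hilbertFunction_zero_pos hne
    omega
  | succ t ih =>
    specialize ih (by omega)
    by_cases htY : 1 ≤ t ∧ t + {a ∈ S | a.rep (e 2) = 0}.card ≤ Y.card
    · have := hilbertFunction_filter_add_three_le hS hY hn hd htY.1 htY.2
      omega
    · have := hilbertFunction_filter_add_two_le hS hn htd
      omega

lemma le_card_of_conicTangentFunctional_mem_dualSpan
    (hS : conicTangentFunctional e d n Y ∈ dualSpan d (S : Set _)) (hY : 0 ∉ Y) (hn : 3 ≤ n)
    (hd : 2 * (n + Y.card) ≤ d) : 2 * d + 1 - n + Y.card ≤ S.card := by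
  classical
  have hcard : {a ∈ S | a.rep (e 2) = 0}.card + {a ∈ S | a.rep (e 2) ≠ 0}.card = S.card :=
    Finset.card_filter_add_card_filter_not _
  obtain ⟨t, ht | ht⟩ := Nat.even_or_odd' (2 * d - n)
  · have := add_min_le_hilbertFunction_filter hS hY hn hd (t := t) (by omega)
    have := hilbertFunction_le_card {a ∈ S | a.rep (e 2) ≠ 0} t
    omega
  · have := add_min_le_hilbertFunction_filter hS hY hn hd (t := t) (by omega)
    have := hilbertFunction_filter_add_one_le hS hn (t := t) (by omega)
    have := hilbertFunction_le_card {a ∈ S | a.rep (e 2) ≠ 0} (t + 1)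
    omega

lemma srank_mk_conicTangentFunctional {ω : K} (hω : IsPrimitiveRoot ω (2 * d + 1 - n))
    (hY : 0 ∉ Y) (hn : 3 ≤ n) (hd : 2 * (n + Y.card) ≤ d)
    (h0 : conicTangentFunctional e d n Y ≠ 0) :
    srank d (Projectivization.mk K _ h0) = 2 * d + 1 - n + Y.card :=
  srank_mk_eq h0 (symRankLE_conicTangentFunctional hω (by omega)) fun _ ⟨_, hSr, hS⟩ =>
    (le_card_of_conicTangentFunctional_mem_dualSpan hS hY hn hd).trans hSr

end RankLowerBound

theorem stmt17_general (K : Type) [Field K] [Infinite K] {m n k d : ℕ} (hm : 2 ≤ m) (hn : 3 ≤ n)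
    (hd : 2 * (n + k) ≤ d) (hω : ∃ ω : K, IsPrimitiveRoot ω (n + 1))
    (hω' : ∃ ω : K, IsPrimitiveRoot ω (2 * d + 1 - n)) :
    (sigmaSet K m d (n + 1 + k) (2 * d + 1 - n + k)).Nonempty := by
  obtain ⟨ω, hω⟩ := hω
  obtain ⟨ω', hω'⟩ := hω'
  obtain ⟨Y, hY, rfl⟩ := (Set.finite_singleton (0 : K)).infinite_compl.exists_subset_card_eq k
  have hY0 : 0 ∉ Y := fun h => hY h rfl
  have h0 := conicTangentFunctional_ne_zero (e := Fin.castLEEmb (show 3 ≤ m + 1 by omega)) hY0 hd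
  exact ⟨_, brank_mk_conicTangentFunctional hω hY0 hd h0,
    srank_mk_conicTangentFunctional hω' hY0 hn hd h0⟩

end

/-- Step (d) of the proof of the main theorem: nonemptiness of `σ_{s,r}(X_{m,d})` for
`2d+2-s ≤ r ≤ 2d+s-7` with `r + s` even. -/
theorem stmt17 (K : Type) [Field K] [IsAlgClosed K] [CharZero K]
    (m s d : ℕ) (hm : 2 ≤ m) (hs : 5 ≤ s) (hd : 2 * s + 2 ≤ d) :
    ∀ r : ℕ, 2 * d + 2 ≤ r + s → r + 7 ≤ 2 * d + s → (r + s) % 2 = 0 →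
      (sigmaSet K m d s r).Nonempty := by
  intro r h1 h2 h3
  obtain ⟨n, k, hn, rfl, rfl⟩ : ∃ n k, 3 ≤ n ∧ s = n + 1 + k ∧ r = 2 * d + 1 - n + k :=
    ⟨(2 * d + s - r) / 2, (r + s - 2 * d - 2) / 2, by omega, by omega, by omega⟩
  have : NeZero (2 * d + 1 - n) := ⟨by omega⟩
  exact stmt17_general K hm hn (by omega) (HasEnoughRootsOfUnity.exists_primitiveRoot K _)
    (HasEnoughRootsOfUnity.exists_primitiveRoot K _)
end

section
/- Fix integers m ≥ 2, s ≥ 5 and d ≥ 2s+2. For every integer r with 2d+3−s ≤ r ≤ 2d+s−7 and r+s ≡ 1 (mod 2), one has σ_{s,r}(X_{m,d}) ≠ ∅. -/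
open scoped LinearAlgebra.Projectivization

/-!
All the points `P` come from the plane. Let `P` be the sum of a tangent vector at `e₁` and one at
`e₂`, both pointing to `e₀`, of `u` points on the line `x₁ = 0` through `e₀` and `e₂`, one of them
`e₀`, and of `k` points on the line `x₀ = 0` through `e₁` and `e₂`. Then `P` has border rank
`4 + u + k` and rank `2d - 1 - u + k`.

*Border rank.* Replacing each tangent vector by a difference quotient exhibits `P` as a limit of
sums of `4 + u + k` points. Conversely a catalecticant minor of size `4 + u + k`, which vanishes on
every smaller secant variety, does not vanish at `P`.

*Rank.* A divided difference writes the tangent vector at `eᵢ` as a combination of `d` points of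
the line through `e₀` and `eᵢ`; the two combinations share the point `e₀`, and the `u` points of `P`
on `x₁ = 0` are chosen so that they cancel `u` points of the second one. For the lower bound, let
`S` be any set of points spanning `P` and let `q` be a form vanishing at `e₁` and `e₂`.
Multiplication by `q` turns both expressions of `P` into combinations of points, so that either
these agree, or there is a linear relation in degree `d - deg q` among few points. Such relations
are scarce: in degree `t` they involve at least `t + 2` points; if they involve at most `2t + 1`
points of the plane, these lie on a line, and if at most `5t/2`, on a conic. Applied to `q = x₀x₁`,
`x₀x₂`, `x₁x₂` this counts `S` when it lies on the triangle of coordinates; otherwise it puts the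
points of `S` off the triangle on a line or on a conic, and counting along this curve gives the same
bound.
-/

namespace SymmetricRank

open MvPolynomial
open scoped Classical

local notation "e₀" => (![1, 0, 0] : Fin 3 → _)
local notation "e₁" => (![0, 1, 0] : Fin 3 → _)
local notation "e₂" => (![0, 0, 1] : Fin 3 → _)

section Normalized

variable {ι K : Type*} [LinearOrder ι] [Field K]

/-- The vectors whose first nonzero coordinate is `1`: each point of the projective space has
exactly one such representative. -/
def IsNormalized (v : ι → K) : Prop := ∃ i, v i = 1 ∧ ∀ j < i, v j = 0

lemma IsNormalized.ne_zero {v : ι → K} (hv : IsNormalized v) : v ≠ 0 := by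
  rintro rfl
  obtain ⟨i, hi, -⟩ := hv
  exact zero_ne_one hi

lemma IsNormalized.exists_linear_form_separating {v w : ι → K} (hv : IsNormalized v)
    (hw : IsNormalized w) (hvw : v ≠ w) :
    ∃ q : MvPolynomial ι K, q.IsHomogeneous 1 ∧ eval v q = 0 ∧ eval w q ≠ 0 := by
  by_contra! h
  have minors : ∀ i j, v i * w j = v j * w i := fun i j => by
    simpa [sub_eq_zero] using h (C (v i) * X j - C (v j) * X i)
      ((isHomogeneous_C_mul_X _ _).sub (isHomogeneous_C_mul_X _ _)) (by simp [mul_comm])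
  obtain ⟨i, hvi, hvlt⟩ := hv
  obtain ⟨i', hwi, hwlt⟩ := hw
  have proportional : ∀ j, w j = v j * w i := fun j => by simpa [hvi] using minors i j
  obtain hlt | rfl | hgt := lt_trichotomy i i'
  · simpa [hwi, hwlt i hlt] using proportional i'
  · exact hvw (funext fun j => by simp [proportional j, hwi])
  · simpa [hwi, hvlt i' hgt] using proportional i'

lemma exists_eq_smul_isNormalized [Finite ι] [Nonempty ι] (v : ι → K) :
    ∃ (c : K) (w : ι → K), IsNormalized w ∧ v = c • w := by
  have of_ne_zero : ∀ v : ι → K, v ≠ 0 → ∃ (c : K) (w : ι → K), IsNormalized w ∧ v = c • w := by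
    intro v hv
    obtain ⟨i, hi, hmin⟩ := Set.Finite.exists_minimal (Set.toFinite {i | v i ≠ 0})
      (Function.ne_iff.1 hv)
    refine ⟨v i, (v i)⁻¹ • v, ⟨i, inv_mul_cancel₀ hi, fun j hj => ?_⟩, (smul_inv_smul₀ hi v).symm⟩
    have : v j = 0 := by_contra fun h => hj.not_ge (hmin h hj.le)
    simp [this]
  obtain rfl | hv := eq_or_ne v 0
  · obtain ⟨-, w, hw, -⟩ := of_ne_zero 1 one_ne_zero
    exact ⟨0, w, hw, (zero_smul K w).symm⟩
  · exact of_ne_zero v hv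

end Normalized

section EvalSum

variable {ι K : Type*} [Field K]

/-- The functional `h ↦ ∑ v, μ v * h(v)` attached to a finite family of weighted points `μ`. -/
noncomputable def evalSum : ((ι → K) →₀ K) →ₗ[K] MvPolynomial ι K →ₗ[K] K :=
  Finsupp.linearCombination K fun v => (aeval v).toLinearMap

lemma evalSum_apply (μ : (ι → K) →₀ K) (h : MvPolynomial ι K) :
    evalSum μ h = μ.sum fun v a => a * eval v h := by
  simp [evalSum, Finsupp.linearCombination_apply, Finsupp.sum, aeval_eq_eval]

@[simp]
lemma evalSum_single (v : ι → K) (a : K) (h : MvPolynomial ι K) :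
    evalSum (Finsupp.single v a) h = a * eval v h := by
  simp [evalSum_apply]

lemma evalSum_mapDomain {α : Type*} (f : α → ι → K) (ω : α →₀ K) (h : MvPolynomial ι K) :
    evalSum (ω.mapDomain f) h = ω.sum fun t a => a * eval (f t) h := by
  rw [evalSum_apply, Finsupp.sum_mapDomain_index (by simp) (by simp [add_mul])]

/-- The contraction of the weighted points `μ` by the polynomial `q`: the weight at each point `v`
is multiplied by `q(v)`. -/
noncomputable def contract (q : MvPolynomial ι K) (μ : (ι → K) →₀ K) : (ι → K) →₀ K :=
  (fun v => eval v q) • μ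

@[simp]
lemma contract_apply (q : MvPolynomial ι K) (μ : (ι → K) →₀ K) (v : ι → K) :
    contract q μ v = eval v q * μ v := rfl

lemma evalSum_contract (q h : MvPolynomial ι K) (μ : (ι → K) →₀ K) :
    evalSum (contract q μ) h = evalSum μ (q * h) := by
  have hsub : (contract q μ).support ⊆ μ.support := fun v => by
    simp only [Finsupp.mem_support_iff, contract_apply]
    exact right_ne_zero_of_mul
  rw [evalSum_apply, evalSum_apply, Finsupp.sum_of_support_subset _ hsub _ (by simp), Finsupp.sum]
  exact Finset.sum_congr rfl fun v _ => by rw [contract_apply, map_mul]; ring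

lemma mem_support_contract {q : MvPolynomial ι K} {μ : (ι → K) →₀ K} {v : ι → K} :
    v ∈ (contract q μ).support ↔ v ∈ μ.support ∧ eval v q ≠ 0 := by
  simp [and_comm]

lemma support_contract (q : MvPolynomial ι K) (μ : (ι → K) →₀ K) :
    (contract q μ).support = {v ∈ μ.support | eval v q ≠ 0} := by
  ext v
  rw [mem_support_contract, Finset.mem_filter]

lemma card_support_contract_add_card_zeros (q : MvPolynomial ι K) (μ : (ι → K) →₀ K) :
    (contract q μ).support.card + {v ∈ μ.support | eval v q = 0}.card = μ.support.card := by
  rw [support_contract, add_comm]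
  exact Finset.card_filter_add_card_filter_not _

/-- The values at the points of `μ` of the forms of degree `t` satisfy the linear relation with
coefficients `μ`. -/
def IsRelation (t : ℕ) (μ : (ι → K) →₀ K) : Prop :=
  ∀ h : MvPolynomial ι K, h.IsHomogeneous t → evalSum μ h = 0

lemma IsRelation.of_add {t e : ℕ} {μ : (ι → K) →₀ K} (h : IsRelation (e + t) μ)
    {q : MvPolynomial ι K} (hq : q.IsHomogeneous e) : IsRelation t (contract q μ) :=
  fun f hf => by rw [evalSum_contract, h _ (hq.mul hf)]

lemma IsRelation.eq_zero_of_card_support_le_one {t : ℕ} {μ : (ι → K) →₀ K} (h : IsRelation t μ)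
    (hμ : ∀ v ∈ μ.support, v ≠ 0) (hcard : μ.support.card ≤ 1) : μ = 0 := by
  obtain ⟨v, a, rfl⟩ := Finsupp.card_support_le_one'.1 hcard
  by_contra ha
  rw [Finsupp.single_eq_zero] at ha
  obtain ⟨i, hi⟩ := Function.ne_iff.1 (hμ v (by simp [ha]))
  have heval : a * v i ^ t = 0 := by
    simpa only [evalSum_single, map_pow, eval_X] using h (X i ^ t) (isHomogeneous_X_pow i t)
  exact mul_ne_zero ha (pow_ne_zero t hi) heval

theorem IsRelation.add_two_le_card_support [LinearOrder ι] {t : ℕ} {μ : (ι → K) →₀ K}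
    (h : IsRelation t μ) (hμ : ∀ v ∈ μ.support, IsNormalized v) (h0 : μ ≠ 0) :
    t + 2 ≤ μ.support.card := by
  have two_le : 2 ≤ μ.support.card := by
    by_contra! hlt
    exact h0 (h.eq_zero_of_card_support_le_one (fun v hv => (hμ v hv).ne_zero) (by lia))
  induction t generalizing μ with
  | zero => simpa using two_le
  | succ t ih =>
    obtain ⟨v, hv, w, hw, hvw⟩ := Finset.one_lt_card.1 two_le
    obtain ⟨q, hq, hqv, hqw⟩ := (hμ v hv).exists_linear_form_separating (hμ w hw) hvw
    have hrel : IsRelation t (contract q μ) := .of_add (by rwa [add_comm]) hq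
    have hnorm : ∀ u ∈ (contract q μ).support, IsNormalized u :=
      fun u hu => hμ u (mem_support_contract.1 hu).1
    have hne : contract q μ ≠ 0 :=
      Finsupp.support_nonempty_iff.1 ⟨w, mem_support_contract.2 ⟨hw, hqw⟩⟩
    have hcard := card_support_contract_add_card_zeros q μ
    have hzero : 0 < {u ∈ μ.support | eval u q = 0}.card :=
      Finset.card_pos.2 ⟨v, Finset.mem_filter.2 ⟨hv, hqv⟩⟩
    have htwo : 2 ≤ (contract q μ).support.card := by
      by_contra! hlt
      exact hne (hrel.eq_zero_of_card_support_le_one (fun u hu => (hnorm u hu).ne_zero) (by lia))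
    have := ih hrel hnorm hne htwo
    lia

end EvalSum

section PlaneRelations

variable {ι K : Type*} [Field K]

lemma exists_form_vanishing_on [Fintype ι] (e : ℕ) {E : Finset (ι → K)}
    (hE : E.card < (Fintype.card ι + e - 1).choose e) :
    ∃ q : MvPolynomial ι K, q ≠ 0 ∧ q.IsHomogeneous e ∧ ∀ v ∈ E, eval v q = 0 := by
  let M := Finset.univ.finsuppAntidiag (ι := ι) e
  let toForm : (M → K) →ₗ[K] MvPolynomial ι K :=
    Fintype.linearCombination K fun a : M => monomial a.1 (1 : K)
  let evalAt : MvPolynomial ι K →ₗ[K] (E → K) := LinearMap.pi fun v => (aeval v.1).toLinearMap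
  have hker : (evalAt ∘ₗ toForm).ker ≠ ⊥ := LinearMap.ker_ne_bot_of_finrank_lt <| by
    simpa [M, Finset.card_finsuppAntidiag_nat_eq_choose] using hE
  obtain ⟨c, hc, hc0⟩ := Submodule.exists_mem_ne_zero_of_ne_bot hker
  have hindep : LinearIndependent K fun a : M => monomial (R := K) a.1 1 := by
    simpa [Function.comp_def] using
      (basisMonomials ι K).linearIndependent.comp ((↑) : M → ι →₀ ℕ) Subtype.val_injective
  refine ⟨toForm c, ?_, ?_, fun v hv => ?_⟩
  · exact fun h => hc0 (funext (Fintype.linearIndependent_iff.1 hindep c h))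
  · refine IsHomogeneous.sum _ _ _ fun a _ => ?_
    rw [smul_monomial]
    exact isHomogeneous_monomial _
      ((Finsupp.degree_eq_sum a.1).trans (Finset.mem_finsuppAntidiag.1 a.2).1)
  · simpa [evalAt, aeval_eq_eval] using congrFun hc ⟨v, hv⟩

lemma exists_form_maximizing_zeros [Fintype ι] {e n : ℕ}
    (hn : n < (Fintype.card ι + e - 1).choose e) (E : Finset (ι → K)) :
    ∃ q : MvPolynomial ι K, q ≠ 0 ∧ q.IsHomogeneous e ∧
      min n E.card ≤ {v ∈ E | eval v q = 0}.card ∧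
      ∀ q' : MvPolynomial ι K, q' ≠ 0 → q'.IsHomogeneous e →
        {v ∈ E | eval v q' = 0}.card ≤ {v ∈ E | eval v q = 0}.card := by
  let zeroCounts : Set ℕ := {c | ∃ q : MvPolynomial ι K, q ≠ 0 ∧ q.IsHomogeneous e ∧
    {v ∈ E | eval v q = 0}.card = c}
  have hbdd : BddAbove zeroCounts := ⟨E.card, by
    rintro _ ⟨q, -, -, rfl⟩
    exact Finset.card_filter_le _ _⟩
  obtain ⟨F, hFE, hF⟩ := Finset.exists_subset_card_eq (min_le_right n E.card)
  obtain ⟨p, hp0, hp, hpF⟩ := exists_form_vanishing_on (K := K) e (E := F)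
    (by rw [hF]; exact (min_le_left _ _).trans_lt hn)
  obtain ⟨q, hq0, hq, hmax⟩ := Nat.sSup_mem (s := zeroCounts) ⟨_, p, hp0, hp, rfl⟩ hbdd
  have hle : ∀ q' : MvPolynomial ι K, q' ≠ 0 → q'.IsHomogeneous e →
      {v ∈ E | eval v q' = 0}.card ≤ {v ∈ E | eval v q = 0}.card := fun q' hq0' hq' => by
    rw [hmax]
    exact le_csSup hbdd ⟨q', hq0', hq', rfl⟩
  refine ⟨q, hq0, hq, ?_, hle⟩
  calc min n E.card = F.card := hF.symm
    _ ≤ {v ∈ E | eval v p = 0}.card :=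
      Finset.card_le_card fun v hv => Finset.mem_filter.2 ⟨hFE hv, hpF v hv⟩
    _ ≤ {v ∈ E | eval v q = 0}.card := hle p hp0 hp

lemma card_support_contract_le_card_zeros {p q : MvPolynomial ι K} {μ : (ι → K) →₀ K}
    (hp : ∀ v ∈ (contract q μ).support, eval v p = 0) :
    (contract q μ).support.card ≤ {v ∈ μ.support | eval v p = 0}.card :=
  Finset.card_le_card fun v hv => Finset.mem_filter.2 ⟨(mem_support_contract.1 hv).1, hp v hv⟩

lemma eval_eq_zero_of_contract_eq_zero {q : MvPolynomial ι K} {μ : (ι → K) →₀ K}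
    (h : contract q μ = 0) : ∀ v ∈ μ.support, eval v q = 0 := fun v hv => by
  by_contra hv'
  simpa [h] using mem_support_contract.2 ⟨hv, hv'⟩

variable {t : ℕ} {μ : (Fin 3 → K) →₀ K}

theorem IsRelation.exists_line (h : IsRelation t μ) (hμ : ∀ v ∈ μ.support, IsNormalized v)
    (hcard : μ.support.card ≤ 2 * t + 1) :
    ∃ l : MvPolynomial (Fin 3) K, l ≠ 0 ∧ l.IsHomogeneous 1 ∧ ∀ v ∈ μ.support, eval v l = 0 := by
  induction t generalizing μ with
  | zero => exact exists_form_vanishing_on 1 (by simpa using Nat.lt_of_le_of_lt hcard (by decide))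
  | succ t ih =>
    obtain ⟨l, hl0, hl, hmin, hmax⟩ :=
      exists_form_maximizing_zeros (e := 1) (n := 2) (by simp) μ.support
    have hsplit := card_support_contract_add_card_zeros l μ
    have hrel : IsRelation t (contract l μ) := .of_add (by rwa [add_comm]) hl
    have hnorm : ∀ v ∈ (contract l μ).support, IsNormalized v :=
      fun v hv => hμ v (mem_support_contract.1 hv).1
    obtain ⟨l', hl0', hl', hvan⟩ := ih hrel hnorm (by lia)
    have hoff := (card_support_contract_le_card_zeros hvan).trans (hmax l' hl0' hl')
    refine ⟨l, hl0, hl, eval_eq_zero_of_contract_eq_zero (by_contra fun hne => ?_)⟩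
    have := hrel.add_two_le_card_support hnorm hne
    lia

theorem IsRelation.exists_conic (h : IsRelation t μ) (hμ : ∀ v ∈ μ.support, IsNormalized v)
    (hcard : 2 * μ.support.card ≤ 5 * t) :
    ∃ c : MvPolynomial (Fin 3) K, c ≠ 0 ∧ c.IsHomogeneous 2 ∧ ∀ v ∈ μ.support, eval v c = 0 := by
  induction t using Nat.strong_induction_on generalizing μ with
  | _ t ih =>
  obtain hsmall | hlarge := Nat.lt_or_ge μ.support.card 6
  · exact exists_form_vanishing_on 2 hsmall
  have norm_contract : ∀ q, ∀ v ∈ (contract q μ).support, IsNormalized v :=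
    fun q v hv => hμ v (mem_support_contract.1 hv).1
  obtain ⟨c, hc0, hc, hmin, hmax⟩ :=
    exists_form_maximizing_zeros (e := 2) (n := 5) (by decide) μ.support
  have hsplit := card_support_contract_add_card_zeros c μ
  obtain ⟨t, rfl⟩ : ∃ t', t = 2 + t' := ⟨t - 2, by lia⟩
  have hrel := h.of_add hc
  by_cases hne : contract c μ = 0
  · exact ⟨c, hc0, hc, eval_eq_zero_of_contract_eq_zero hne⟩
  obtain ⟨c', hc0', hc', hvan⟩ := ih t (by lia) hrel (norm_contract c) (by lia)
  have hoff := (card_support_contract_le_card_zeros hvan).trans (hmax c' hc0' hc')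
  -- At most half of the points are off `c`, few enough to lie on a line `l`;
  -- the points off `l` are then few enough to lie on a second line `l'`.
  obtain ⟨l, hl0, hl, hlvan⟩ := hrel.exists_line (norm_contract c) (by lia)
  have hl_card := card_support_contract_le_card_zeros hlvan
  have hc_card := hrel.add_two_le_card_support (norm_contract c) hne
  have hlsplit := card_support_contract_add_card_zeros l μ
  have hlrel : IsRelation (1 + t) (contract l μ) :=
    .of_add (by rwa [← add_assoc]) hl
  obtain ⟨l', hl0', hl', hlvan'⟩ := hlrel.exists_line (norm_contract l) (by lia)
  refine ⟨l * l', mul_ne_zero hl0 hl0', hl.mul hl', fun v hv => ?_⟩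
  by_cases hlv : eval v l = 0
  · simp [hlv]
  · simp [hlvan' v (mem_support_contract.2 ⟨hv, hlv⟩)]

end PlaneRelations

section TernaryForms

variable {K : Type*} [Field K] {q : MvPolynomial (Fin 3) K}

lemma ternary_linear_form_eq (hq : q.IsHomogeneous 1) :
    q = C (eval e₀ q) * X 0 + C (eval e₁ q) * X 1 + C (eval e₂ q) * X 2 := by
  rw [← mem_homogeneousSubmodule, homogeneousSubmodule_one_eq_span_X,
    Submodule.mem_span_range_iff_exists_fun] at hq
  obtain ⟨a, rfl⟩ := hq
  simp [Fin.sum_univ_three, smul_eq_C_mul]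

lemma ternary_quadratic_form_eq (hq : q.IsHomogeneous 2) :
    q = C (eval e₀ q) * X 0 ^ 2 + C (eval e₁ q) * X 1 ^ 2 + C (eval e₂ q) * X 2 ^ 2 +
      C (eval e₁ (pderiv 0 q)) * (X 0 * X 1) + C (eval e₂ (pderiv 0 q)) * (X 0 * X 2) +
      C (eval e₂ (pderiv 1 q)) * (X 1 * X 2) := by
  rw [← mem_homogeneousSubmodule, ← homogeneousSubmodule_one_pow, sq] at hq
  induction hq using Submodule.mul_induction_on' with
  | mem_mul_mem p hp r hr =>
    rw [mem_homogeneousSubmodule] at hp hr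
    rw [ternary_linear_form_eq hp, ternary_linear_form_eq hr]
    simp only [map_add, map_mul, eval_C, eval_X, Derivation.leibniz, pderiv_C, pderiv_X,
      smul_eq_mul, Pi.single_eq_same, Pi.single_eq_of_ne, ne_eq, Fin.reduceEq, not_false_eq_true,
      zero_ne_one, one_ne_zero, Matrix.cons_val, map_zero, map_one]
    ring
  | add x _ y _ hx hy =>
    nth_rw 1 [hx, hy]
    simp only [map_add]
    ring

lemma eval_linear_form (hq : q.IsHomogeneous 1) (v : Fin 3 → K) :
    eval v q = eval e₀ q * v 0 + eval e₁ q * v 1 + eval e₂ q * v 2 := by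
  simpa using congrArg (eval v) (ternary_linear_form_eq hq)

end TernaryForms

section TwoTangents

variable {K : Type*} [Field K]

/-- The functional `h ↦ ∂h/∂x₀ (e₁) + ∂h/∂x₀ (e₂) + ∑ v, τ v * h(v)`: a tangent vector at each of
`e₁` and `e₂`, pointing to `e₀`, plus the weighted points `τ`. -/
noncomputable def twoTangents (τ : (Fin 3 → K) →₀ K) : MvPolynomial (Fin 3) K →ₗ[K] K :=
  ((aeval e₁).toLinearMap + (aeval e₂).toLinearMap) ∘ₗ
    (pderiv 0 : Derivation K _ (MvPolynomial (Fin 3) K)).toLinearMap + evalSum τ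

lemma twoTangents_apply (τ : (Fin 3 → K) →₀ K) (h : MvPolynomial (Fin 3) K) :
    twoTangents τ h = eval e₁ (pderiv 0 h) + eval e₂ (pderiv 0 h) + evalSum τ h := by
  simp [twoTangents, aeval_eq_eval]

/-- The weighted points which, for `q(e₁) = q(e₂) = 0`, represent `h ↦ twoTangents τ (q * h)`. -/
noncomputable def residual (τ : (Fin 3 → K) →₀ K) (q : MvPolynomial (Fin 3) K) :
    (Fin 3 → K) →₀ K :=
  contract q τ + Finsupp.single e₁ (eval e₁ (pderiv 0 q)) +
    Finsupp.single e₂ (eval e₂ (pderiv 0 q))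

lemma evalSum_residual (τ : (Fin 3 → K) →₀ K) {q : MvPolynomial (Fin 3) K} (hq₁ : eval e₁ q = 0)
    (hq₂ : eval e₂ q = 0) (h : MvPolynomial (Fin 3) K) :
    evalSum (residual τ q) h = twoTangents τ (q * h) := by
  simp only [residual, twoTangents_apply, map_add, LinearMap.add_apply, evalSum_contract,
    evalSum_single, Derivation.leibniz, smul_eq_mul, map_mul, hq₁, hq₂]
  ring

lemma residual_apply_e₁ (τ : (Fin 3 → K) →₀ K) {q : MvPolynomial (Fin 3) K}
    (hq₁ : eval e₁ q = 0) : residual τ q e₁ = eval e₁ (pderiv 0 q) := by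
  simp [residual, hq₁]

lemma residual_apply_e₂ (τ : (Fin 3 → K) →₀ K) {q : MvPolynomial (Fin 3) K}
    (hq₂ : eval e₂ q = 0) : residual τ q e₂ = eval e₂ (pderiv 0 q) := by
  simp [residual, hq₂]

lemma isNormalized_e₁ : IsNormalized (e₁ : Fin 3 → K) :=
  ⟨1, by simp, fun j hj => by simp [(Fin.lt_one_iff j).1 hj]⟩

lemma isNormalized_e₂ : IsNormalized (e₂ : Fin 3 → K) :=
  ⟨2, by simp, fun j hj => by fin_cases j <;> simp_all⟩

/-- The weights `τ` live on points `O` of the line `x₁ = 0` and `E` of the line `x₀ = 0`, among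
which is the intersection `e₀` of the two tangent lines of `twoTangents`. -/
structure IsLineWeight (τ : (Fin 3 → K) →₀ K) (O E : Finset (Fin 3 → K)) : Prop where
  support_eq : τ.support = O ∪ E
  left : ∀ v ∈ O, v 0 = 1 ∧ v 1 = 0
  right : ∀ v ∈ E, v 0 = 0 ∧ v 1 = 1 ∧ v 2 ≠ 0
  e₀_mem : e₀ ∈ O

namespace IsLineWeight

variable {τ : (Fin 3 → K) →₀ K} {O E : Finset (Fin 3 → K)}

lemma isNormalized (hτ : IsLineWeight τ O E) {v : Fin 3 → K} (hv : v ∈ τ.support) :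
    IsNormalized v := by
  rw [hτ.support_eq, Finset.mem_union] at hv
  obtain hv | hv := hv
  · exact ⟨0, (hτ.left v hv).1, fun j hj => absurd hj (Fin.not_lt_zero j)⟩
  · refine ⟨1, (hτ.right v hv).2.1, fun j hj => ?_⟩
    rw [(Fin.lt_one_iff j).1 hj, (hτ.right v hv).1]

lemma card_support (hτ : IsLineWeight τ O E) : τ.support.card = O.card + E.card := by
  rw [hτ.support_eq, Finset.card_union_of_disjoint]
  exact Finset.disjoint_left.2 fun v hO hE =>
    one_ne_zero ((hτ.left v hO).1.symm.trans (hτ.right v hE).1)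

lemma e₁_notMem (hτ : IsLineWeight τ O E) : e₁ ∉ τ.support := by
  rw [hτ.support_eq, Finset.mem_union, not_or]
  exact ⟨fun h => by simpa using (hτ.left _ h).1, fun h => by simpa using (hτ.right _ h).2.2⟩

lemma e₂_notMem (hτ : IsLineWeight τ O E) : e₂ ∉ τ.support := by
  rw [hτ.support_eq, Finset.mem_union, not_or]
  exact ⟨fun h => by simpa using (hτ.left _ h).1, fun h => by simpa using (hτ.right _ h).2.1⟩

lemma support_residual_subset (hτ : IsLineWeight τ O E) {q : MvPolynomial (Fin 3) K}
    {S : Finset (Fin 3 → K)} (hO : ∀ v ∈ O, v ∉ S → eval v q = 0)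
    (hE : ∀ v ∈ E, v ∉ S → eval v q = 0) (h₁ : e₁ ∉ S → eval e₁ (pderiv 0 q) = 0)
    (h₂ : e₂ ∉ S → eval e₂ (pderiv 0 q) = 0) : (residual τ q).support ⊆ S := by
  intro v hv
  by_contra hvS
  have hq : eval v q * τ v = 0 := by
    by_cases hvτ : v ∈ τ.support
    · rw [hτ.support_eq, Finset.mem_union] at hvτ
      rw [hvτ.elim (hO v · hvS) (hE v · hvS), zero_mul]
    · rw [Finsupp.notMem_support_iff.1 hvτ, mul_zero]
  have hs : ∀ {e : Fin 3 → K}, (e ∉ S → eval e (pderiv 0 q) = 0) →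
      Finsupp.single e (eval e (pderiv 0 q)) v = 0 := fun {e} he => by
    obtain rfl | hne := eq_or_ne e v
    · rw [he hvS, Finsupp.single_zero, Finsupp.zero_apply]
    · exact Finsupp.single_eq_of_ne' hne
  simp [residual, hq, hs h₁, hs h₂] at hv

end IsLineWeight

/-- On the forms of degree `d`, the functional `twoTangents τ` is the sum of evaluations `σ`, all of
whose points are normalized. -/
structure IsDecomposition (d : ℕ) (τ σ : (Fin 3 → K) →₀ K) : Prop where
  eq_evalSum : ∀ h : MvPolynomial (Fin 3) K, h.IsHomogeneous d → twoTangents τ h = evalSum σ h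
  normalized : ∀ v ∈ σ.support, IsNormalized v

namespace IsDecomposition

variable {d e : ℕ} {τ σ : (Fin 3 → K) →₀ K} {O E : Finset (Fin 3 → K)} {q : MvPolynomial (Fin 3) K}

lemma normalized_contract (hσ : IsDecomposition d τ σ) :
    ∀ v ∈ (contract q σ).support, IsNormalized v :=
  fun v hv => hσ.normalized v (mem_support_contract.1 hv).1

lemma normalized_contract_sub_residual (hσ : IsDecomposition d τ σ) (hτ : IsLineWeight τ O E) :
    ∀ v ∈ (contract q σ - residual τ q).support, IsNormalized v := by
  intro v hv
  by_contra hnorm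
  have hσv : σ v = 0 := by_contra fun h => hnorm (hσ.normalized v (Finsupp.mem_support_iff.2 h))
  have hτv : τ v = 0 := by_contra fun h => hnorm (hτ.isNormalized (Finsupp.mem_support_iff.2 h))
  have h₁ : v ≠ e₁ := by
    rintro rfl
    exact hnorm isNormalized_e₁
  have h₂ : v ≠ e₂ := by
    rintro rfl
    exact hnorm isNormalized_e₂
  simp [residual, hσv, hτv, h₁, h₂] at hv

lemma isRelation_contract_sub_residual (hσ : IsDecomposition (e + d) τ σ) (hq : q.IsHomogeneous e)
    (hq₁ : eval e₁ q = 0) (hq₂ : eval e₂ q = 0) :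
    IsRelation d (contract q σ - residual τ q) := fun h hh => by
  rw [map_sub, LinearMap.sub_apply, evalSum_contract, evalSum_residual τ hq₁ hq₂,
    hσ.eq_evalSum _ (hq.mul hh), sub_self]

lemma contract_eq_residual_or_le (hσ : IsDecomposition d τ σ) (hτ : IsLineWeight τ O E)
    (hq : q.IsHomogeneous e) (hq₁ : eval e₁ q = 0) (hq₂ : eval e₂ q = 0) (hed : e ≤ d) :
    contract q σ = residual τ q ∨
      d + 2 ≤ e + (contract q σ).support.card + (residual τ q).support.card := by
  obtain ⟨t, rfl⟩ := Nat.exists_eq_add_of_le hed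
  refine or_iff_not_imp_left.2 fun hne => ?_
  have hle := (hσ.isRelation_contract_sub_residual hq hq₁ hq₂).add_two_le_card_support
    (hσ.normalized_contract_sub_residual hτ) (sub_ne_zero.2 hne)
  have hsub := (Finset.card_le_card (Finsupp.support_sub (f := contract q σ)
    (g := residual τ q))).trans (Finset.card_union_le _ _)
  lia

lemma le_of_pderiv_ne_zero (hσ : IsDecomposition d τ σ) (hτ : IsLineWeight τ O E)
    (hq : q.IsHomogeneous e) (hq₁ : eval e₁ q = 0) (hq₂ : eval e₂ q = 0) (hed : e ≤ d)
    (hne : eval e₁ (pderiv 0 q) ≠ 0 ∨ eval e₂ (pderiv 0 q) ≠ 0) :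
    d + 2 ≤ e + (contract q σ).support.card + (residual τ q).support.card := by
  refine (hσ.contract_eq_residual_or_le hτ hq hq₁ hq₂ hed).resolve_left fun heq => ?_
  rw [← residual_apply_e₁ τ hq₁, ← residual_apply_e₂ τ hq₂, ← heq] at hne
  simp [hq₁, hq₂] at hne

end IsDecomposition

end TwoTangents

section LowerBound

variable {K : Type*} [Field K]

lemma card_support_contract_add_three_le {ι : Type*} {σ : (ι → K) →₀ K} {p q r : MvPolynomial ι K}
    (hpq : ∀ v ∈ σ.support, eval v p = 0 ∨ eval v q = 0)
    (hpr : ∀ v ∈ σ.support, eval v p = 0 ∨ eval v r = 0)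
    (hqr : ∀ v ∈ σ.support, eval v q = 0 ∨ eval v r = 0) :
    (contract p σ).support.card + (contract q σ).support.card + (contract r σ).support.card ≤
      σ.support.card := by
  have disjoint : ∀ {f g : MvPolynomial ι K},
      (∀ v ∈ σ.support, eval v f = 0 ∨ eval v g = 0) →
      Disjoint (contract f σ).support (contract g σ).support := fun hfg =>
    Finset.disjoint_left.2 fun v hf hg => by
      rw [mem_support_contract] at hf hg
      exact (hfg v hf.1).elim hf.2 hg.2
  rw [← Finset.card_union_of_disjoint (disjoint hpq),
    ← Finset.card_union_of_disjoint (Finset.disjoint_union_left.2 ⟨disjoint hpr, disjoint hqr⟩)]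
  refine Finset.card_le_card fun v hv => ?_
  simp only [Finset.mem_union, mem_support_contract] at hv
  tauto

lemma card_insert_erase_le {α : Type*} [DecidableEq α] {s : Finset α} {a : α} (ha : a ∈ s) (b : α) :
    (insert b (s.erase a)).card ≤ s.card := by
  have := Finset.card_insert_le b (s.erase a)
  rwa [Finset.card_erase_add_one ha] at this

namespace IsDecomposition

variable {d : ℕ} {τ σ : (Fin 3 → K) →₀ K} {O E : Finset (Fin 3 → K)}
  {w : MvPolynomial (Fin 3) K}

lemma card_residual_x₀x₁_mul_le (hτ : IsLineWeight τ O E) :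
    (residual τ (X 0 * X 1 * w)).support.card ≤ 1 :=
  Finset.card_le_card (t := {e₁}) <| hτ.support_residual_subset
    (fun v hv _ => by simp [hτ.left v hv]) (fun v hv _ => by simp [hτ.right v hv])
    (by simp) (by simp)

lemma card_residual_x₀x₂_mul_le (hτ : IsLineWeight τ O E) :
    (residual τ (X 0 * X 2 * w)).support.card ≤ O.card := by
  refine (Finset.card_le_card ?_).trans (card_insert_erase_le hτ.e₀_mem e₂)
  refine hτ.support_residual_subset (fun v hv hvS => ?_) (fun v hv _ => by simp [hτ.right v hv])
    (by simp) (by simp)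
  obtain rfl : v = e₀ := by_contra fun h => by simp [hv, h] at hvS
  simp

lemma le_card_contract_x₀x₁ (hσ : IsDecomposition d τ σ) (hτ : IsLineWeight τ O E) {e : ℕ}
    (hw : w.IsHomogeneous e) (hd : e + 2 ≤ d) (hw₁ : eval e₁ w ≠ 0) :
    d ≤ e + (contract (X 0 * X 1 * w) σ).support.card + 1 := by
  have := hσ.le_of_pderiv_ne_zero hτ (((isHomogeneous_X K 0).mul (isHomogeneous_X K 1)).mul hw)
    (by simp) (by simp) (by lia) (.inl (by simpa using hw₁))
  have := card_residual_x₀x₁_mul_le (w := w) hτ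
  lia

lemma le_card_contract_x₀x₂ (hσ : IsDecomposition d τ σ) (hτ : IsLineWeight τ O E) {e : ℕ}
    (hw : w.IsHomogeneous e) (hd : e + 2 ≤ d) (hw₂ : eval e₂ w ≠ 0) :
    d ≤ e + (contract (X 0 * X 2 * w) σ).support.card + O.card := by
  have := hσ.le_of_pderiv_ne_zero hτ (((isHomogeneous_X K 0).mul (isHomogeneous_X K 2)).mul hw)
    (by simp) (by simp) (by lia) (.inr (by simpa using hw₂))
  have := card_residual_x₀x₂_mul_le (w := w) hτ
  lia

lemma card_le_card_contract_x₁x₂ (hσ : IsDecomposition d τ σ) (hτ : IsLineWeight τ O E)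
    (hd : 2 * E.card + 2 ≤ d) : E.card ≤ (contract (X 1 * X 2) σ).support.card := by
  have hsub : (residual τ (X 1 * X 2)).support ⊆ E :=
    hτ.support_residual_subset (fun v hv _ => by simp [hτ.left v hv])
      (fun v hv hvS => absurd hv hvS) (by simp) (by simp)
  obtain heq | hle := hσ.contract_eq_residual_or_le hτ
    ((isHomogeneous_X K 1).mul (isHomogeneous_X K 2)) (by simp) (by simp) (by lia)
  · refine Finset.card_le_card fun v hv => ?_
    have hτv : τ v ≠ 0 := Finsupp.mem_support_iff.1 (hτ.support_eq ▸ Finset.mem_union_right O hv)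
    simp [heq, residual, hτv, hτ.right v hv]
  · have := Finset.card_le_card hsub
    lia

lemma le_card_of_support_subset_triangle (hσ : IsDecomposition d τ σ) (hτ : IsLineWeight τ O E)
    (hd : 2 * E.card + 9 ≤ d) (htri : ∀ v ∈ σ.support, v 0 * v 1 * v 2 = 0) :
    2 * d + E.card ≤ σ.support.card + O.card + 1 := by
  have h₀₁ := hσ.le_card_contract_x₀x₁ hτ (isHomogeneous_one _ _) (by lia) (by simp)
  have h₀₂ := hσ.le_card_contract_x₀x₂ hτ (isHomogeneous_one _ _) (by lia) (by simp)
  have h₁₂ := hσ.card_le_card_contract_x₁x₂ hτ (by lia)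
  have hcoord : ∀ v ∈ σ.support, v 0 = 0 ∨ v 1 = 0 ∨ v 2 = 0 := fun v hv => by
    simpa [or_assoc] using htri v hv
  have hsum := card_support_contract_add_three_le (σ := σ) (p := X 0 * X 1 * 1)
    (q := X 0 * X 2 * 1) (r := X 1 * X 2)
    (fun v hv => by simp only [map_mul, map_one, eval_X]; grind [hcoord v hv])
    (fun v hv => by simp only [map_mul, map_one, eval_X]; grind [hcoord v hv])
    (fun v hv => by simp only [map_mul, map_one, eval_X]; grind [hcoord v hv])
  lia

lemma isRelation_contract_triangle (hσ : IsDecomposition (3 + d) τ σ) (hτ : IsLineWeight τ O E) :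
    IsRelation d (contract (X 0 * X 1 * X 2) σ) := by
  have hres : residual τ (X 0 * X 1 * X 2) = 0 :=
    Finsupp.support_eq_empty.1 <| Finset.subset_empty.1 <| hτ.support_residual_subset
      (fun v hv _ => by simp [hτ.left v hv]) (fun v hv _ => by simp [hτ.right v hv])
      (by simp) (by simp)
  have := hσ.isRelation_contract_sub_residual (q := X 0 * X 1 * X 2)
    (((isHomogeneous_X K 0).mul (isHomogeneous_X K 1)).mul (isHomogeneous_X K 2))
    (by simp) (by simp)
  rwa [hres, sub_zero] at this

lemma contract_triangle_ne_zero (htri : ¬ ∀ v ∈ σ.support, v 0 * v 1 * v 2 = 0) :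
    contract (X 0 * X 1 * X 2) σ ≠ 0 := fun h =>
  htri fun v hv => by simpa using eval_eq_zero_of_contract_eq_zero h v hv

lemma le_card_contract_triangle (hσ : IsDecomposition d τ σ) (hτ : IsLineWeight τ O E)
    (hd : 3 ≤ d) (htri : ¬ ∀ v ∈ σ.support, v 0 * v 1 * v 2 = 0) :
    d ≤ (contract (X 0 * X 1 * X 2) σ).support.card + 1 := by
  obtain ⟨t, rfl⟩ := Nat.exists_eq_add_of_le hd
  have := (hσ.isRelation_contract_triangle hτ).add_two_le_card_support hσ.normalized_contract
    (contract_triangle_ne_zero htri)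
  lia

lemma le_card_contract_x₁_mul (hσ : IsDecomposition d τ σ) (hτ : IsLineWeight τ O E)
    (hw : w.IsHomogeneous 1) (hd : 2 ≤ d) (hw₀ : eval e₀ w ≠ 0) (hw₁ : eval e₁ w = 0) :
    d ≤ (contract (X 1 * w) σ).support.card + E.card + 1 := by
  have hpderiv : eval e₁ (pderiv 0 w) = eval e₀ w := by
    simp [congrArg (pderiv 0) (ternary_linear_form_eq hw)]
  have hle := hσ.le_of_pderiv_ne_zero hτ ((isHomogeneous_X K 1).mul hw) (by simp [hw₁]) (by simp)
    hd (.inl (by simpa [hpderiv]))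
  have hres : (residual τ (X 1 * w)).support ⊆ insert e₁ E :=
    hτ.support_residual_subset (fun v hv _ => by simp [hτ.left v hv])
      (fun v hv hvS => absurd (Finset.mem_insert_of_mem hv) hvS) (by simp) (by simp)
  have := (Finset.card_le_card hres).trans (Finset.card_insert_le _ _)
  lia

lemma le_card_contract_x₂_mul (hσ : IsDecomposition d τ σ) (hτ : IsLineWeight τ O E)
    (hw : w.IsHomogeneous 1) (hd : 2 ≤ d) (hw₀ : eval e₀ w ≠ 0) (hw₂ : eval e₂ w = 0) :
    d ≤ (contract (X 2 * w) σ).support.card + O.card + E.card := by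
  have hpderiv : eval e₂ (pderiv 0 w) = eval e₀ w := by
    simp [congrArg (pderiv 0) (ternary_linear_form_eq hw)]
  have hle := hσ.le_of_pderiv_ne_zero hτ ((isHomogeneous_X K 2).mul hw) (by simp) (by simp [hw₂])
    hd (.inr (by simpa [hpderiv]))
  have hres : (residual τ (X 2 * w)).support ⊆ insert e₂ (O.erase e₀) ∪ E := by
    refine hτ.support_residual_subset (fun v hv hvS => ?_)
      (fun v hv hvS => absurd (Finset.mem_union_right _ hv) hvS) (by simp) (by simp)
    obtain rfl : v = e₀ := by_contra fun h => by simp [hv, h] at hvS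
    simp
  have := (Finset.card_le_card hres).trans (Finset.card_union_le _ _)
  have := card_insert_erase_le hτ.e₀_mem e₂
  lia

lemma card_contract_add_card_contract_add_le (hσ : IsDecomposition d τ σ)
    (hτ : IsLineWeight τ O E) (hd : 3 ≤ d) (htri : ¬ ∀ v ∈ σ.support, v 0 * v 1 * v 2 = 0)
    (hline : ∀ v ∈ (contract (X 0 * X 1 * X 2) σ).support, eval v w = 0)
    {f g : MvPolynomial (Fin 3) K}
    (hfg : ∀ v, v 0 * v 1 * v 2 = 0 → eval v (f * w) = 0 ∨ eval v (g * w) = 0) :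
    (contract (f * w) σ).support.card + (contract (g * w) σ).support.card + d ≤
      σ.support.card + 1 := by
  have hprod : ∀ v ∈ σ.support, v 0 * v 1 * v 2 = 0 ∨ eval v w = 0 := fun v hv =>
    or_iff_not_imp_left.2 fun h => hline v (mem_support_contract.2 ⟨hv, by simpa using h⟩)
  have hvanish : ∀ f : MvPolynomial (Fin 3) K, ∀ v ∈ σ.support,
      eval v (X 0 * X 1 * X 2) = 0 ∨ eval v (f * w) = 0 := fun f v hv =>
    (hprod v hv).imp (by simp) fun h => by rw [map_mul, h, mul_zero]
  have htri_card := hσ.le_card_contract_triangle hτ hd htri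
  have hsum := card_support_contract_add_three_le (hvanish f) (hvanish g) fun v hv =>
    (hprod v hv).elim (hfg v) fun h => .inl (by rw [map_mul, h, mul_zero])
  lia

lemma le_card_of_off_triangle_subset_line (hσ : IsDecomposition d τ σ) (hτ : IsLineWeight τ O E)
    (hd : 2 * E.card + 9 ≤ d) (htri : ¬ ∀ v ∈ σ.support, v 0 * v 1 * v 2 = 0)
    (hw0 : w ≠ 0) (hw : w.IsHomogeneous 1)
    (hline : ∀ v ∈ (contract (X 0 * X 1 * X 2) σ).support, eval v w = 0) :
    2 * d + E.card ≤ σ.support.card + O.card + 1 := by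
  obtain ⟨v, hv⟩ : (contract (X 0 * X 1 * X 2) σ).support.Nonempty :=
    Finsupp.support_nonempty_iff.2 (contract_triangle_ne_zero htri)
  have hv_line := hline v hv
  have hv_ne : v 0 * v 1 * v 2 ≠ 0 := by simpa using (mem_support_contract.1 hv).2
  rw [eval_linear_form hw] at hv_line
  have hcoeff : eval e₀ w ≠ 0 ∨ eval e₁ w ≠ 0 ∨ eval e₂ w ≠ 0 := by
    by_contra! h
    exact hw0 (by rw [ternary_linear_form_eq hw]; simp [h])
  have hsum := fun f g => hσ.card_contract_add_card_contract_add_le hτ (by lia) htri hline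
    (f := f) (g := g)
  by_cases hw₁ : eval e₁ w = 0
  · have h₁ := hσ.le_card_contract_x₁_mul hτ hw (by lia) (by grind) hw₁
    have h₂ := hσ.le_card_contract_x₀x₂ hτ hw (by lia) (by grind)
    have := hsum (X 1) (X 0 * X 2) (by simp only [map_mul, eval_X]; grind)
    lia
  have h₁ := hσ.le_card_contract_x₀x₁ hτ hw (by lia) hw₁
  by_cases hw₂ : eval e₂ w = 0
  · have h₂ := hσ.le_card_contract_x₂_mul hτ hw (by lia) (by grind) hw₂
    have := hsum (X 0 * X 1) (X 2) (by simp only [map_mul, eval_X]; grind)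
    lia
  · have h₂ := hσ.le_card_contract_x₀x₂ hτ hw (by lia) hw₂
    have := hsum (X 0 * X 1) (X 0 * X 2) (by simp only [map_mul, eval_X]; grind)
    lia

end IsDecomposition

end LowerBound

section ConicCase

variable {K : Type*} [Field K]

namespace IsDecomposition

variable {d : ℕ} {τ σ : (Fin 3 → K) →₀ K} {O E : Finset (Fin 3 → K)}
  {c : MvPolynomial (Fin 3) K}

lemma eval_eq_zero_of_conic (hσ : IsDecomposition d τ σ) (hτ : IsLineWeight τ O E)
    (hc : c.IsHomogeneous 2) (hd : 3 ≤ d)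
    (hcard : (contract c σ).support.card + O.card + 3 < d) : eval e₁ c = 0 ∧ eval e₂ c = 0 := by
  have hres : (residual τ (X 0 * c)).support ⊆ {e₁, e₂} ∪ O :=
    hτ.support_residual_subset (fun v hv hvS => absurd (Finset.mem_union_right _ hv) hvS)
      (fun v hv _ => by simp [hτ.right v hv]) (by simp) (by simp)
  have hres_card := (Finset.card_le_card hres).trans (Finset.card_union_le _ _)
  have htwo : ({e₁, e₂} : Finset (Fin 3 → K)).card ≤ 2 := Finset.card_le_two
  have hsub : (contract (X 0 * c) σ).support ⊆ (contract c σ).support := fun v hv => by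
    rw [mem_support_contract, map_mul] at hv
    exact mem_support_contract.2 ⟨hv.1, right_ne_zero_of_mul hv.2⟩
  have hsub_card := Finset.card_le_card hsub
  by_contra hne
  have := hσ.le_of_pderiv_ne_zero hτ (q := X 0 * c) ((isHomogeneous_X K 0).mul hc)
    (by simp) (by simp) hd (by simpa [or_iff_not_imp_left] using hne)
  lia

lemma contract_eq_contract_of_conic (hσ : IsDecomposition d τ σ) (hτ : IsLineWeight τ O E)
    (hc : c.IsHomogeneous 2) (hd : 3 ≤ d)
    (hcard : (contract c σ).support.card + O.card + E.card + 3 < d) :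
    contract c σ = contract c τ ∧ eval e₁ (pderiv 0 c) = 0 ∧ eval e₂ (pderiv 0 c) = 0 := by
  obtain ⟨hc₁, hc₂⟩ := hσ.eval_eq_zero_of_conic hτ hc hd (by lia)
  have hres : (residual τ c).support ⊆ {e₁, e₂} ∪ (O ∪ E) :=
    hτ.support_residual_subset
      (fun v hv hvS => absurd (Finset.mem_union_right _ (Finset.mem_union_left _ hv)) hvS)
      (fun v hv hvS => absurd (Finset.mem_union_right _ (Finset.mem_union_right _ hv)) hvS)
      (by simp) (by simp)
  have hres_card := (Finset.card_le_card hres).trans (Finset.card_union_le _ _)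
  have htwo : ({e₁, e₂} : Finset (Fin 3 → K)).card ≤ 2 := Finset.card_le_two
  have hOE := Finset.card_union_le O E
  have hder : eval e₁ (pderiv 0 c) = 0 ∧ eval e₂ (pderiv 0 c) = 0 := by
    by_contra hne
    have := hσ.le_of_pderiv_ne_zero hτ hc hc₁ hc₂ (by lia) (not_and_or.1 hne)
    lia
  refine ⟨?_, hder⟩
  have heq := (hσ.contract_eq_residual_or_le hτ hc hc₁ hc₂ (by lia)).resolve_right (by lia)
  rwa [residual, hder.1, hder.2, Finsupp.single_zero, Finsupp.single_zero, add_zero,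
    add_zero] at heq

/-- The conic is then `αx₀² + βx₁x₂`, tangent at `e₁` and `e₂` to the given tangent vectors, and it
avoids the points of `τ`. -/
lemma eq_on_support_of_conic (hσ : IsDecomposition d τ σ) (hτ : IsLineWeight τ O E)
    (hc : c.IsHomogeneous 2) (hc0 : c ≠ 0) (hd : 3 ≤ d)
    (hcard : (contract c σ).support.card + O.card + E.card + 3 < d)
    (htri : ¬ ∀ v ∈ σ.support, v 0 * v 1 * v 2 = 0)
    (hconic : ∀ v ∈ (contract (X 0 * X 1 * X 2) σ).support, eval v c = 0) :
    ∀ v ∈ τ.support, σ v = τ v := by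
  obtain ⟨hc₁, hc₂⟩ := hσ.eval_eq_zero_of_conic hτ hc hd (by lia)
  obtain ⟨heq, hder₁, hder₂⟩ := hσ.contract_eq_contract_of_conic hτ hc hd hcard
  have hform := ternary_quadratic_form_eq hc
  simp only [hc₁, hc₂, hder₁, hder₂, map_zero, zero_mul, add_zero] at hform
  have heval : ∀ v, eval v c = eval e₀ c * v 0 ^ 2 + eval e₂ (pderiv 1 c) * (v 1 * v 2) :=
    fun v => by simpa using congrArg (eval v) hform
  obtain ⟨p, hp⟩ : (contract (X 0 * X 1 * X 2) σ).support.Nonempty :=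
    Finsupp.support_nonempty_iff.2 (contract_triangle_ne_zero htri)
  have hp_conic := hconic p hp
  have hp_ne : p 0 * p 1 * p 2 ≠ 0 := by simpa using (mem_support_contract.1 hp).2
  rw [heval] at hp_conic
  have hcoeff : eval e₀ c ≠ 0 ∨ eval e₂ (pderiv 1 c) ≠ 0 := by
    by_contra! h
    exact hc0 (by rw [hform, h.1, h.2]; simp)
  have hα : eval e₀ c ≠ 0 := by grind
  have hβ : eval e₂ (pderiv 1 c) ≠ 0 := by grind
  intro v hv
  have hcv : eval v c ≠ 0 := by
    rw [hτ.support_eq, Finset.mem_union] at hv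
    obtain hv | hv := hv
    · rw [heval v]
      simpa [hτ.left v hv] using hα
    · rw [heval v]
      simpa [hτ.right v hv] using hβ
  exact mul_left_cancel₀ hcv (DFunLike.congr_fun heq v)

/-- Residuating by `x₀` leaves the new points of `σ` and the two points `e₁` and `e₂`; since these
cannot be collinear there are at least `2 * d` of them. -/
lemma two_mul_le_card_contract_x₀ (hσ : IsDecomposition (1 + d) τ σ) (hτ : IsLineWeight τ O E)
    (hd : 1 ≤ d) : 2 * d + 2 ≤ (contract (X 0) σ - residual τ (X 0)).support.card := by
  have hrel := hσ.isRelation_contract_sub_residual (isHomogeneous_X K 0) (by simp) (by simp)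
  have hnorm := hσ.normalized_contract_sub_residual hτ (q := X 0)
  have hμ₁ : (contract (X 0) σ - residual τ (X 0)) e₁ = -1 := by simp [residual]
  have hμ₂ : (contract (X 0) σ - residual τ (X 0)) e₂ = -1 := by simp [residual]
  by_contra! hlt
  obtain ⟨l, hl0, hl, hline⟩ := hrel.exists_line hnorm (by lia)
  have hl₁ : eval e₁ l = 0 := hline _ (by simp [hμ₁])
  have hl₂ : eval e₂ l = 0 := hline _ (by simp [hμ₂])
  have hl₀ : eval e₀ l ≠ 0 := fun hl₀ => hl0 (by
    rw [ternary_linear_form_eq hl, hl₀, hl₁, hl₂]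
    simp)
  have hsub : (contract (X 0) σ - residual τ (X 0)).support ⊆ {e₁, e₂} := fun v hv => by
    have hv₀ : v 0 = 0 := by
      have hlv := hline v hv
      rw [eval_linear_form hl, hl₁, hl₂] at hlv
      simpa [hl₀] using hlv
    by_contra hv'
    simp only [Finset.mem_insert, Finset.mem_singleton, not_or] at hv'
    simp [residual, hv₀, hv'.1, hv'.2] at hv
  have hle := hrel.add_two_le_card_support hnorm fun h => by simp [h] at hμ₁
  have htwo := (Finset.card_le_card hsub).trans Finset.card_le_two
  lia

lemma card_ge_of_eq_on_support (hσ : IsDecomposition d τ σ) (hτ : IsLineWeight τ O E)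
    (hd : 2 ≤ d) (heq : ∀ v ∈ τ.support, σ v = τ v) :
    2 * d + O.card + E.card ≤ σ.support.card + 2 := by
  obtain ⟨t, rfl⟩ := Nat.exists_eq_add_of_le (show 1 ≤ d by lia)
  have hlow := hσ.two_mul_le_card_contract_x₀ hτ (by lia)
  have hsub : (contract (X 0) σ - residual τ (X 0)).support ⊆
      (σ.support \ τ.support) ∪ {e₁, e₂} := fun v hv => by
    by_contra hv'
    simp only [Finset.mem_union, Finset.mem_sdiff, Finsupp.mem_support_iff, Finset.mem_insert,
      Finset.mem_singleton, not_or, not_and, not_not] at hv'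
    have hστ : σ v = τ v := by
      by_cases hv_τ : v ∈ τ.support
      · exact heq v hv_τ
      · have := Finsupp.notMem_support_iff.1 hv_τ
        grind
    simp [residual, hστ, hv'.2.1, hv'.2.2] at hv
  have hτσ : τ.support ⊆ σ.support := fun v hv => by
    rw [Finsupp.mem_support_iff, heq v hv]
    exact Finsupp.mem_support_iff.1 hv
  have hcard := (Finset.card_le_card hsub).trans (Finset.card_union_le _ _)
  have htwo : ({e₁, e₂} : Finset (Fin 3 → K)).card ≤ 2 := Finset.card_le_two
  have hsdiff := Finset.card_sdiff_add_card_eq_card hτσ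
  rw [hτ.card_support] at hsdiff
  lia

theorem le_card_support (hσ : IsDecomposition d τ σ) (hτ : IsLineWeight τ O E)
    (hd : 2 * E.card + 9 ≤ d) : 2 * d + E.card ≤ σ.support.card + O.card + 1 := by
  by_cases htri : ∀ v ∈ σ.support, v 0 * v 1 * v 2 = 0
  · exact hσ.le_card_of_support_subset_triangle hτ hd htri
  by_contra! hlt
  have hO : 0 < O.card := Finset.card_pos.2 ⟨_, hτ.e₀_mem⟩
  obtain ⟨t, rfl⟩ := Nat.exists_eq_add_of_le (show 3 ≤ d by lia)
  have hrel := hσ.isRelation_contract_triangle hτ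
  have hoff : 2 * t + 2 ≤ (contract (X 0 * X 1 * X 2) σ).support.card := by
    by_contra! hfew
    obtain ⟨l, hl0, hl, hline⟩ := hrel.exists_line hσ.normalized_contract (by lia)
    exact hlt.not_ge (hσ.le_card_of_off_triangle_subset_line hτ hd htri hl0 hl hline)
  have hsplit := card_support_contract_add_card_zeros (X 0 * X 1 * X 2) σ
  obtain ⟨c, hc0, hc, hconic⟩ := hrel.exists_conic hσ.normalized_contract (by lia)
  have hoff_le := card_support_contract_le_card_zeros hconic
  have hc_card := card_support_contract_add_card_zeros c σ
  have heq := hσ.eq_on_support_of_conic hτ hc hc0 (by lia) (by lia) htri hconic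
  have := hσ.card_ge_of_eq_on_support hτ (by lia) heq
  lia

end IsDecomposition

end ConicCase

section RestrictLine

variable {ι K : Type*} [Field K]

lemma eval_smul_of_isHomogeneous {d : ℕ} {h : MvPolynomial ι K} (hh : h.IsHomogeneous d) (c : K)
    (v : ι → K) : eval (c • v) h = c ^ d * eval v h := by
  rw [eval_eq, eval_eq, Finset.mul_sum]
  refine Finset.sum_congr rfl fun e he => ?_
  have hpow : ∏ i ∈ e.support, c ^ e i = c ^ d := by
    rw [Finset.prod_pow_eq_pow_sum, hh.degree_eq_sum_deg_support he]
  simp only [Pi.smul_apply, smul_eq_mul, mul_pow, Finset.prod_mul_distrib, hpow]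
  ring

/-- The restriction of a polynomial to the line through `p` in the direction `q`. -/
noncomputable def restrictLine (p q : ι → K) : MvPolynomial ι K →ₐ[K] Polynomial K :=
  aeval fun i => Polynomial.C (p i) + Polynomial.C (q i) * Polynomial.X

lemma eval_restrictLine (p q : ι → K) (h : MvPolynomial ι K) (t : K) :
    (restrictLine p q h).eval t = eval (p + t • q) h := by
  induction h using MvPolynomial.induction_on with
  | C a => simp [restrictLine]
  | add f g hf hg => simp [hf, hg]
  | mul_X f i hf =>
    rw [map_mul, Polynomial.eval_mul, hf, map_mul]
    simp [restrictLine, mul_comm t]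

lemma natDegree_restrictLine_le (p q : ι → K) {d : ℕ} {h : MvPolynomial ι K}
    (hh : h.IsHomogeneous d) : (restrictLine p q h).natDegree ≤ d := by
  have := MvPolynomial.aeval_natDegree_le (n := 1) h hh.totalDegree_le
    (fun i => Polynomial.C (p i) + Polynomial.C (q i) * Polynomial.X)
    (fun i => by compute_degree)
  simpa [restrictLine] using this

lemma coeff_one_restrictLine [Fintype ι] (p q : ι → K) (h : MvPolynomial ι K) :
    (restrictLine p q h).coeff 1 = ∑ i, q i * eval p (pderiv i h) := by
  have hzero : ∀ f, (restrictLine p q f).coeff 0 = eval p f := fun f => by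
    simpa [Polynomial.coeff_zero_eq_eval_zero] using eval_restrictLine p q f 0
  induction h using MvPolynomial.induction_on with
  | C a => simp [restrictLine]
  | add f g hf hg => simp [hf, hg, mul_add, Finset.sum_add_distrib]
  | mul_X f i hf =>
    have hX : restrictLine p q (X i) = Polynomial.C (p i) + Polynomial.C (q i) * Polynomial.X := by
      simp [restrictLine]
    have hsum : ∑ j, q j * (eval p (pderiv j f) * p i + eval p f * (if i = j then 1 else 0)) =
        (restrictLine p q f).coeff 1 * p i + eval p f * q i := by
      simp [hf, mul_add, Finset.sum_add_distrib, Finset.sum_mul, mul_assoc, mul_comm (q i)]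
    rw [map_mul, hX, mul_add, Polynomial.coeff_add, Polynomial.coeff_mul_C, ← mul_assoc,
      Polynomial.coeff_mul_X, Polynomial.coeff_mul_C, hzero, ← hsum]
    simp [pderiv_X, Pi.single_apply, apply_ite (eval p), add_comm, mul_comm]

lemma reflect_restrictLine [Infinite K] (p q : ι → K) {d : ℕ} {h : MvPolynomial ι K}
    (hh : h.IsHomogeneous d) : (restrictLine p q h).reflect d = restrictLine q p h := by
  refine Polynomial.eq_of_infinite_eval_eq _ _ ((Set.finite_singleton 0).infinite_compl.mono
    fun t (ht : t ≠ 0) => ?_)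
  let := invertibleOfNonzero (inv_ne_zero ht)
  have hrefl := Polynomial.eval₂_reflect_mul_pow (RingHom.id K) t⁻¹ d _
    (natDegree_restrictLine_le p q hh)
  rw [Polynomial.eval₂_id, Polynomial.eval₂_id, invOf_eq_inv, inv_inv, eval_restrictLine] at hrefl
  have hscale : q + t • p = t • (p + t⁻¹ • q) := by
    rw [smul_add, smul_inv_smul₀ ht, add_comm]
  rw [Set.mem_ofPred_eq, eval_restrictLine, hscale, eval_smul_of_isHomogeneous hh, ← hrefl,
    mul_left_comm, ← mul_pow, mul_inv_cancel₀ ht, one_pow, mul_one]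

lemma coeff_pred_restrictLine [Infinite K] [Fintype ι] (p q : ι → K) {d : ℕ} (hd : 0 < d)
    {h : MvPolynomial ι K} (hh : h.IsHomogeneous d) :
    (restrictLine p q h).coeff (d - 1) = ∑ i, p i * eval q (pderiv i h) := by
  rw [← reflect_restrictLine q p hh, Polynomial.coeff_reflect, Polynomial.revAt_le (Nat.sub_le d 1),
    Nat.sub_sub_self hd, coeff_one_restrictLine]

end RestrictLine

section DividedDifference

variable {K : Type*} [Field K]

/-- On polynomials of degree less than `N.card` this is the leading coefficient of the Lagrange
interpolant; since the nodes sum to `0`, both sides vanish on the monic polynomial with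
roots `N`. -/
lemma coeff_card_pred_eq_sum {N : Finset K} (hN : 0 < N.card) (hsum : ∑ t ∈ N, t = 0)
    {g : Polynomial K} (hg : g.natDegree ≤ N.card) :
    g.coeff (N.card - 1) = ∑ t ∈ N, (∏ j ∈ N.erase t, (t - j))⁻¹ * g.eval t := by
  set w : Polynomial K := ∏ t ∈ N, (Polynomial.X - Polynomial.C t)
  have hw_monic : w.Monic := Polynomial.monic_prod_X_sub_C _ _
  have hw_deg : w.natDegree = N.card := Polynomial.natDegree_finsetProd_X_sub_C_eq_card _ _
  have hw_coeff : w.coeff (N.card - 1) = 0 := by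
    simpa [hsum] using Polynomial.prod_X_sub_C_coeff_card_pred N (fun t : K => t) hN
  have hw_eval : ∀ t ∈ N, w.eval t = 0 := fun t ht => by
    rw [Polynomial.eval_prod]
    exact Finset.prod_eq_zero ht (by simp)
  have hlt : (g - Polynomial.C (g.coeff N.card) * w).degree < N.card := by
    rw [Polynomial.degree_lt_iff_coeff_zero]
    intro n hn
    obtain rfl | hn := hn.eq_or_lt
    · simp [show w.coeff N.card = 1 from hw_deg ▸ hw_monic.coeff_natDegree]
    · simp [Polynomial.coeff_eq_zero_of_natDegree_lt (hg.trans_lt hn),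
        Polynomial.coeff_eq_zero_of_natDegree_lt (hw_deg.trans_lt hn)]
  have hlagrange := Lagrange.coeff_eq_sum (v := fun t : K => t) (fun _ _ _ _ h => h) hlt
  rw [Polynomial.coeff_sub, Polynomial.coeff_C_mul, hw_coeff, mul_zero, sub_zero] at hlagrange
  rw [hlagrange]
  refine Finset.sum_congr rfl fun t ht => ?_
  simp [hw_eval t ht, div_eq_inv_mul]

lemma exists_weights_coeff_card_pred {N : Finset K} (hN : 0 < N.card) (hsum : ∑ t ∈ N, t = 0) :
    ∃ ω : K →₀ K, ω.support = N ∧ ∀ g : Polynomial K, g.natDegree ≤ N.card →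
      g.coeff (N.card - 1) = ω.sum fun t a => a * g.eval t := by
  refine ⟨Finsupp.indicator N fun t _ => (∏ j ∈ N.erase t, (t - j))⁻¹,
    (Finsupp.support_indicator_subset _ _).antisymm fun t ht => ?_, fun g hg => ?_⟩
  · rw [Finsupp.mem_support_iff, Finsupp.indicator_of_mem ht]
    exact inv_ne_zero (Finset.prod_ne_zero_iff.2 fun j hj =>
      sub_ne_zero.2 (Finset.ne_of_mem_erase hj).symm)
  · rw [coeff_card_pred_eq_sum hN hsum hg, Finsupp.sum_of_support_subset _
      (Finsupp.support_indicator_subset _ _) _ fun t _ => zero_mul _]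
    exact Finset.sum_congr rfl fun t ht => by rw [Finsupp.indicator_of_mem ht]

lemma exists_nodes_sum_eq_zero [CharZero K] {d : ℕ} (hd : 3 ≤ d) :
    ∃ N : Finset K, N.card = d ∧ ∑ t ∈ N, t = 0 ∧ 0 ∈ N := by
  set S := ∑ j ∈ Finset.range (d - 1), j
  have hS : 0 < S := Finset.sum_pos' (by simp) ⟨1, by simp; lia, one_pos⟩
  have hmem : (-(S : K)) ∉ (Finset.range (d - 1)).map Nat.castEmbedding := by
    simp only [Finset.mem_map, Nat.castEmbedding_apply, not_exists, not_and]
    intro j _ hj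
    rw [eq_neg_iff_add_eq_zero, ← Nat.cast_add, Nat.cast_eq_zero] at hj
    lia
  refine ⟨insert (-(S : K)) ((Finset.range (d - 1)).map Nat.castEmbedding), ?_, ?_, ?_⟩
  · rw [Finset.card_insert_of_notMem hmem, Finset.card_map, Finset.card_range]
    lia
  · rw [Finset.sum_insert hmem]
    simp [S]
  · exact Finset.mem_insert_of_mem
      (Finset.mem_map.2 ⟨0, Finset.mem_range.2 (by lia), Nat.cast_zero⟩)

end DividedDifference

section UpperBound

variable {K : Type*} [Field K]

/-- The weights `ω` on the line `x₂ = 0` and again on the line `x₁ = 0`, where `e₀` has the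
coordinate `0` and the points `e₁` and `e₂` are at infinity. -/
noncomputable def onTwoLines (ω : K →₀ K) : (Fin 3 → K) →₀ K :=
  ω.mapDomain (fun t => ![1, t, 0]) + ω.mapDomain fun t => ![1, 0, t]

lemma card_support_onTwoLines_lt {ω : K →₀ K} (h0 : 0 ∈ ω.support) :
    (onTwoLines ω).support.card < 2 * ω.support.card := by
  have hle : (onTwoLines ω).support.card ≤ (ω.support.image (fun t => ![1, t, 0]) ∪
      ω.support.image fun t => ![1, 0, t]).card :=
    Finset.card_le_card (Finsupp.support_add.trans (Finset.union_subset_union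
      Finsupp.mapDomain_support Finsupp.mapDomain_support))
  have hinter : 0 < (ω.support.image (fun t => ![1, t, 0]) ∩
      ω.support.image fun t => ![1, 0, t]).card :=
    Finset.card_pos.2 ⟨e₀, Finset.mem_inter.2
      ⟨Finset.mem_image_of_mem _ h0, Finset.mem_image_of_mem _ h0⟩⟩
  have hunion := Finset.card_union_add_card_inter (ω.support.image fun t => ![1, t, 0])
    (ω.support.image fun t => ![1, 0, t])
  have h₁ := Finset.card_image_le (s := ω.support) (f := fun t : K => ![1, t, 0])
  have h₂ := Finset.card_image_le (s := ω.support) (f := fun t : K => ![1, 0, t])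
  lia

lemma onTwoLines_apply_ne_zero [CharZero K] {ω : K →₀ K} {t : K} (ht : t ∈ ω.support) :
    onTwoLines ω ![1, 0, t] ≠ 0 := by
  have hinj₁ : Function.Injective fun t : K => ![1, t, 0] := fun s t h => by simpa using h
  have hinj₂ : Function.Injective fun t : K => ![1, 0, t] := fun s t h => by simpa using h
  rw [onTwoLines, Finsupp.add_apply, Finsupp.mapDomain_apply hinj₂]
  obtain rfl | ht0 := eq_or_ne t 0
  · rw [Finsupp.mapDomain_apply hinj₁, ← two_mul]
    exact mul_ne_zero two_ne_zero (Finsupp.mem_support_iff.1 ht)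
  · rw [Finsupp.mapDomain_of_notMem_range _ _ (by simpa using ht0.symm), zero_add]
    exact Finsupp.mem_support_iff.1 ht

lemma evalSum_onTwoLines [Infinite K] {d : ℕ} (hd : 0 < d) {ω : K →₀ K}
    (hω : ∀ g : Polynomial K, g.natDegree ≤ d → g.coeff (d - 1) = ω.sum fun t a => a * g.eval t)
    {h : MvPolynomial (Fin 3) K} (hh : h.IsHomogeneous d) :
    evalSum (onTwoLines ω) h = eval e₁ (pderiv 0 h) + eval e₂ (pderiv 0 h) := by
  have hline : ∀ q : Fin 3 → K, eval q (pderiv 0 h) = ω.sum fun t a => a * eval (e₀ + t • q) h :=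
    fun q => by
      simpa [coeff_pred_restrictLine e₀ q hd hh, eval_restrictLine, Fin.sum_univ_three] using
        hω _ (natDegree_restrictLine_le e₀ q hh)
  rw [onTwoLines, map_add, LinearMap.add_apply, evalSum_mapDomain, evalSum_mapDomain, hline, hline]
  simp

lemma exists_isLineWeight_support_add_subset {δ : (Fin 3 → K) →₀ K} {O E : Finset (Fin 3 → K)}
    (hO : O ⊆ δ.support) (hleft : ∀ v ∈ O, v 0 = 1 ∧ v 1 = 0)
    (hright : ∀ v ∈ E, v 0 = 0 ∧ v 1 = 1 ∧ v 2 ≠ 0) (he₀ : e₀ ∈ O) :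
    ∃ τ, IsLineWeight τ O E ∧ (δ + τ).support ⊆ E ∪ δ.support \ O := by
  have hdisj : ∀ v ∈ O, v ∉ E := fun v hvO hvE =>
    one_ne_zero ((hleft v hvO).1.symm.trans (hright v hvE).1)
  let γ : (Fin 3 → K) →₀ K := Finsupp.indicator E fun _ _ => 1
  refine ⟨γ - δ.filter (· ∈ O), ⟨?_, hleft, hright, he₀⟩, ?_⟩
  · ext v
    by_cases hv : v ∈ O
    · simpa [γ, hv, hdisj v hv, Finsupp.indicator_apply] using Finsupp.mem_support_iff.1 (hO hv)
    · simp [γ, hv, Finsupp.indicator_apply]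
  · have hsum : δ + (γ - δ.filter (· ∈ O)) = γ + δ.filter (· ∉ O) := by
      rw [add_sub_left_comm, sub_eq_of_eq_add' (Finsupp.filter_add_filter_not δ _).symm]
    rw [hsum]
    refine Finsupp.support_add.trans (Finset.union_subset_union
      (Finsupp.support_indicator_subset _ _) fun v hv => ?_)
    rwa [Finsupp.support_filter, Finset.mem_filter, ← Finset.mem_sdiff] at hv

/-- The divided differences along the lines `x₂ = 0` and `x₁ = 0` represent the tangent vectors by
`2 * d - 1` points, of which `τ` cancels those in `O`. -/
theorem exists_twoTangents_eq_evalSum [CharZero K] {d u k : ℕ} (hu : 1 ≤ u) (hud : u ≤ d)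
    (hd : 3 ≤ d) :
    ∃ (τ σ : (Fin 3 → K) →₀ K) (O E : Finset (Fin 3 → K)),
      IsLineWeight τ O E ∧ O.card = u ∧ E.card = k ∧ σ.support.card + u + 1 ≤ 2 * d + k ∧
      ∀ h : MvPolynomial (Fin 3) K, h.IsHomogeneous d → twoTangents τ h = evalSum σ h := by
  obtain ⟨N, rfl, hsum, h0⟩ := exists_nodes_sum_eq_zero (K := K) hd
  obtain ⟨ω, rfl, hdiff⟩ := exists_weights_coeff_card_pred (by lia) hsum
  obtain ⟨U, h0U, hUN, rfl⟩ := Finset.exists_subsuperset_card_eq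
    (Finset.singleton_subset_iff.2 h0) (by simpa using hu) hud
  obtain ⟨F, hF, rfl⟩ := (Set.finite_singleton (0 : K)).infinite_compl.exists_subset_card_eq k
  have he₀ : e₀ ∈ U.image fun t : K => ![1, 0, t] :=
    Finset.mem_image_of_mem _ (Finset.singleton_subset_iff.1 h0U)
  have hO : U.image (fun t : K => ![1, 0, t]) ⊆ (onTwoLines ω).support :=
    Finset.image_subset_iff.2 fun t ht =>
      Finsupp.mem_support_iff.2 (onTwoLines_apply_ne_zero (hUN ht))
  obtain ⟨τ, hτ, hσ⟩ := exists_isLineWeight_support_add_subset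
    (E := F.image fun t => ![0, 1, t]) hO (by simp)
    (fun v hv => by obtain ⟨t, ht, rfl⟩ := Finset.mem_image.1 hv; simpa using hF ht) he₀
  have hO_card : (U.image fun t : K => ![1, 0, t]).card = U.card :=
    Finset.card_image_of_injective _ fun s t h => by simpa using h
  have hE_card : (F.image fun t : K => ![0, 1, t]).card = F.card :=
    Finset.card_image_of_injective _ fun s t h => by simpa using h
  refine ⟨τ, onTwoLines ω + τ, _, _, hτ, hO_card, hE_card, ?_, fun h hh => ?_⟩
  · have hδ := card_support_onTwoLines_lt h0
    have hσ_card := (Finset.card_le_card hσ).trans (Finset.card_union_le _ _)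
    rw [hE_card] at hσ_card
    have := Finset.card_sdiff_add_card_eq_card hO
    lia
  · rw [twoTangents_apply, map_add, LinearMap.add_apply, evalSum_onTwoLines (by lia) hdiff hh]

end UpperBound

section SymmRankLE

variable {ι κ K : Type*} [Field K] {d n : ℕ}

/-- The functional `φ` on the forms of degree `d` has symmetric rank at most `n`: it is a linear
combination of at most `n` evaluations. -/
def SymmRankLE (n : ℕ) (φ : Module.Dual K (homogeneousSubmodule ι K d)) : Prop :=
  ∃ μ : (ι → K) →₀ K, μ.support.card ≤ n ∧ φ = (evalSum μ).domRestrict _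

lemma SymmRankLE.mono {n' : ℕ} {φ : Module.Dual K (homogeneousSubmodule ι K d)}
    (h : SymmRankLE n φ) (hn : n ≤ n') : SymmRankLE n' φ :=
  let ⟨μ, hμ, heq⟩ := h
  ⟨μ, hμ.trans hn, heq⟩

lemma SymmRankLE.smul {φ : Module.Dual K (homogeneousSubmodule ι K d)} (h : SymmRankLE n φ)
    (c : K) : SymmRankLE n (c • φ) := by
  obtain ⟨μ, hμ, rfl⟩ := h
  refine ⟨c • μ, (Finset.card_le_card Finsupp.support_smul).trans hμ, ?_⟩
  ext g
  simp

lemma symmRankLE_sum (s : Finset κ) (c : κ → K) (v : κ → ι → K) :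
    SymmRankLE s.card (∑ i ∈ s,
      c i • ((aeval (v i)).toLinearMap.domRestrict (homogeneousSubmodule ι K d))) := by
  refine ⟨∑ i ∈ s, Finsupp.single (v i) (c i), ?_, ?_⟩
  · refine (Finset.card_le_card Finsupp.support_finsetSum).trans ?_
    simpa using Finset.card_biUnion_le_card_mul s _ 1 fun i _ =>
      (Finset.card_le_card Finsupp.support_single_subset).trans_eq (Finset.card_singleton _)
  · ext g
    simp [aeval_eq_eval]

lemma SymmRankLE.exists_isNormalized [LinearOrder ι] [Finite ι] [Nonempty ι]
    {φ : Module.Dual K (homogeneousSubmodule ι K d)} (h : SymmRankLE n φ) :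
    ∃ μ : (ι → K) →₀ K, μ.support.card ≤ n ∧ (∀ v ∈ μ.support, IsNormalized v) ∧
      φ = (evalSum μ).domRestrict _ := by
  obtain ⟨μ, hμ, rfl⟩ := h
  choose c w hw hcw using exists_eq_smul_isNormalized (ι := ι) (K := K)
  let μ' : (ι → K) →₀ K := (fun v => c v ^ d) • μ
  have hsub : μ'.support ⊆ μ.support := fun v => by
    simp only [μ', Finsupp.mem_support_iff, Finsupp.coe_pointwise_smul, Pi.smul_apply']
    exact right_ne_zero_of_smul
  have himage : (μ'.mapDomain w).support ⊆ μ.support.image w :=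
    Finsupp.mapDomain_support.trans (Finset.image_subset_image hsub)
  refine ⟨μ'.mapDomain w,
    (Finset.card_le_card himage).trans (Finset.card_image_le.trans hμ), fun v hv => ?_, ?_⟩
  · obtain ⟨u, -, rfl⟩ := Finset.mem_image.1 (himage hv)
    exact hw u
  · ext g
    rw [LinearMap.domRestrict_apply, LinearMap.domRestrict_apply, evalSum_mapDomain, evalSum_apply,
      Finsupp.sum_of_support_subset _ hsub _ (by simp), Finsupp.sum]
    refine Finset.sum_congr rfl fun v _ => ?_
    have heval : eval v (g : MvPolynomial ι K) = c v ^ d * eval (w v) (g : MvPolynomial ι K) := by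
      conv_lhs => rw [hcw v]
      exact eval_smul_of_isHomogeneous g.2 (c v) (w v)
    rw [heval, Finsupp.coe_pointwise_smul, Pi.smul_apply', smul_eq_mul]
    ring

/-- The functional `F ↦ L (F restricted to the coordinate subspace ι)` on the forms of degree `d` in
the variables `κ`. -/
noncomputable def pullRestrict {f : ι → κ} (hf : Function.Injective f) (d : ℕ) :
    (MvPolynomial ι K →ₗ[K] K) →ₗ[K] Module.Dual K (homogeneousSubmodule κ K d) :=
  LinearMap.lcomp K K ((killCompl hf).toLinearMap ∘ₗ (homogeneousSubmodule κ K d).subtype)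

variable {f : ι → κ} {hf : Function.Injective f} {L : MvPolynomial ι K →ₗ[K] K}

lemma pullRestrict_apply (F : homogeneousSubmodule κ K d) :
    pullRestrict hf d L F = L (killCompl hf (F : MvPolynomial κ K)) := rfl

lemma pullRestrict_rename {h : MvPolynomial ι K} (hh : h.IsHomogeneous d) :
    pullRestrict hf d L ⟨rename f h, hh.rename_isHomogeneous⟩ = L h := by
  rw [pullRestrict_apply, killCompl_rename_app]

lemma eval_killCompl (v : ι → K) (h : MvPolynomial κ K) :
    eval v (killCompl hf h) = eval (Function.extend f v 0) h := by
  rw [killCompl, ← aeval_eq_eval, ← aeval_eq_eval, comp_aeval_apply]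
  congr 2
  funext i
  by_cases hi : ∃ j, f j = i
  · obtain ⟨j, rfl⟩ := hi
    simp [hf.extend_apply, Equiv.ofInjective_symm_apply]
  · simp [Set.mem_range, hi]

lemma isHomogeneous_killCompl {h : MvPolynomial κ K} (hh : h.IsHomogeneous d) :
    (killCompl hf h).IsHomogeneous d := by
  rw [← one_mul d]
  refine hh.aeval _ fun i => ?_
  split_ifs
  · exact isHomogeneous_X _ _
  · exact isHomogeneous_zero _ _ _

lemma symmRankLE_pullRestrict_iff :
    SymmRankLE n (pullRestrict hf d L) ↔
      SymmRankLE n (L.domRestrict (homogeneousSubmodule ι K d)) := by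
  constructor
  · rintro ⟨μ, hμ, heq⟩
    refine ⟨μ.mapDomain (· ∘ f),
      (Finset.card_le_card Finsupp.mapDomain_support).trans (Finset.card_image_le.trans hμ), ?_⟩
    ext h
    have := DFunLike.congr_fun heq ⟨rename f h, h.2.rename_isHomogeneous⟩
    rw [pullRestrict_rename h.2] at this
    rw [LinearMap.domRestrict_apply, LinearMap.domRestrict_apply, evalSum_mapDomain, this,
      LinearMap.domRestrict_apply, evalSum_apply]
    simp only [eval_rename]
  · rintro ⟨μ, hμ, heq⟩
    refine ⟨μ.mapDomain (Function.extend f · 0),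
      (Finset.card_le_card Finsupp.mapDomain_support).trans (Finset.card_image_le.trans hμ), ?_⟩
    ext h
    have := DFunLike.congr_fun heq ⟨_, isHomogeneous_killCompl (hf := hf) h.2⟩
    rw [LinearMap.domRestrict_apply, LinearMap.domRestrict_apply] at this
    rw [pullRestrict_apply, this, LinearMap.domRestrict_apply, evalSum_mapDomain, evalSum_apply]
    simp only [eval_killCompl]

end SymmRankLE

section DeterminantalEquations

variable {ι K : Type*} [Field K] {d n : ℕ}

lemma SymmRankLE.det_eq_zero {κ : Type*} [Fintype κ] [DecidableEq κ]
    {φ : Module.Dual K (homogeneousSubmodule ι K d)} (hφ : SymmRankLE n φ)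
    (hn : n < Fintype.card κ) {f g : κ → MvPolynomial ι K}
    (hfg : ∀ i j, (f i * g j).IsHomogeneous d) :
    (Matrix.of fun i j => φ ⟨f i * g j, hfg i j⟩).det = 0 := by
  obtain ⟨μ, hμ, rfl⟩ := hφ
  let A : Matrix κ μ.support K := .of fun i v => eval v.1 (f i)
  let B : Matrix μ.support κ K := .of fun v j => μ v * eval v.1 (g j)
  have hAB : (Matrix.of fun i j =>
      (evalSum μ).domRestrict (homogeneousSubmodule ι K d) ⟨f i * g j, hfg i j⟩) = A * B := by
    ext i j
    rw [Matrix.of_apply, LinearMap.domRestrict_apply, evalSum_apply, Finsupp.sum, Matrix.mul_apply,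
      ← Finset.sum_coe_sort]
    refine Finset.sum_congr rfl fun v _ => ?_
    simp only [A, B, Matrix.of_apply, map_mul]
    ring
  rw [hAB]
  by_contra hdet
  have hrank := Matrix.rank_of_isUnit (A * B)
    ((Matrix.isUnit_iff_isUnit_det _).2 (isUnit_iff_ne_zero.2 hdet))
  have := (Matrix.rank_mul_le_left A B).trans (Matrix.rank_le_card_width A)
  rw [Fintype.card_coe] at this
  lia

end DeterminantalEquations

section PolyFunctions

variable {K V : Type} [Field K] [AddCommGroup V] [Module K V]

lemma det_mem_polyFunctions {κ : Type*} [Fintype κ] [DecidableEq κ] (v : κ → κ → V) :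
    (fun φ : Module.Dual K V => (Matrix.of fun i j => φ (v i j)).det) ∈
      polyFunctions K (Module.Dual K V) := by
  have hsum : (fun φ : Module.Dual K V => (Matrix.of fun i j => φ (v i j)).det) =
      ∑ σ : Equiv.Perm κ, (Equiv.Perm.sign σ : ℤ) •
        ∏ i, (fun φ : Module.Dual K V => φ (v (σ i) i)) := by
    funext φ
    simp [Matrix.det_apply, Units.smul_def]
  rw [hsum]
  exact Subalgebra.sum_mem _ fun σ _ => zsmul_mem (Subalgebra.prod_mem _ fun i _ =>
    show (fun φ : Module.Dual K V => φ (v (σ i) i)) ∈ polyFunctions K (Module.Dual K V) from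
      Algebra.subset_adjoin ⟨Module.Dual.eval K V (v (σ i) i), rfl⟩) _

lemma exists_polynomial_eval_eq {F : V → K} (hF : F ∈ polyFunctions K V) (N : ℕ) (ψ : ℕ → V) :
    ∃ p : Polynomial K, ∀ ε, p.eval ε = F (∑ n ∈ Finset.range N, ε ^ n • ψ n) := by
  induction hF using Algebra.adjoin_induction with
  | mem F hF =>
    obtain ⟨l, rfl⟩ := hF
    refine ⟨∑ n ∈ Finset.range N, Polynomial.C (l (ψ n)) * Polynomial.X ^ n, fun ε => ?_⟩
    simp only [Polynomial.eval_finsetSum, Polynomial.eval_C_mul, Polynomial.eval_X_pow, map_sum,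
      map_smul, smul_eq_mul]
    exact Finset.sum_congr rfl fun n _ => mul_comm _ _
  | algebraMap a => exact ⟨Polynomial.C a, fun ε => Polynomial.eval_C⟩
  | add F G _ _ hF hG =>
    obtain ⟨p, hp⟩ := hF
    obtain ⟨q, hq⟩ := hG
    exact ⟨p + q, fun ε => by simp [hp, hq]⟩
  | mul F G _ _ hF hG =>
    obtain ⟨p, hp⟩ := hF
    obtain ⟨q, hq⟩ := hG
    exact ⟨p * q, fun ε => by simp [hp, hq]⟩

lemma polyFunctions_apply_zero_of_curve [Infinite K] {F : V → K} (hF : F ∈ polyFunctions K V)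
    (N : ℕ) (ψ : ℕ → V)
    (hψ : ∀ ε : K, ε ≠ 0 → F (∑ n ∈ Finset.range (N + 1), ε ^ n • ψ n) = 0) : F (ψ 0) = 0 := by
  obtain ⟨p, hp⟩ := exists_polynomial_eval_eq hF (N + 1) ψ
  have hp0 : p = 0 := p.eq_zero_of_infinite_isRoot <|
    (Set.finite_singleton (0 : K)).infinite_compl.mono fun ε hε => (hp ε).trans (hψ ε hε)
  simpa [hp0, Finset.sum_range_succ'] using (hp 0).symm

end PolyFunctions

section Projective

variable {K : Type} [Field K] {m d n : ℕ} {φ : Module.Dual K (Hd K m d)}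

lemma nu_eq_domRestrict (v : Fin (m + 1) → K) :
    nu d v = (aeval v).toLinearMap.domRestrict (Hd K m d) := rfl

lemma nu_apply (v : Fin (m + 1) → K) (h : Hd K m d) : nu d v h = eval v (h : PR K m) := by
  simp [nu, aeval_eq_eval]

lemma nu_smul (c : K) (v : Fin (m + 1) → K) : nu d (c • v) = c ^ d • nu d v := by
  ext h
  rw [nu_apply, eval_smul_of_isHomogeneous h.2, LinearMap.smul_apply, nu_apply, smul_eq_mul]

lemma exists_rep_eq_smul_nu {Q : PN K m d} (hQ : Q ∈ XSet K m d) :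
    ∃ (c : K) (v : Fin (m + 1) → K), Q.rep = c • nu d v := by
  obtain ⟨a, ha⟩ := hQ
  have hmem : Q.rep ∈ Q.submodule := by
    rw [Projectivization.submodule_eq]
    exact Submodule.mem_span_singleton_self _
  obtain ⟨c, hc⟩ := Submodule.mem_span_singleton.1 (ha ▸ hmem)
  exact ⟨c, a.rep, hc.symm⟩

lemma nu_ne_zero {v : Fin (m + 1) → K} (hv : v ≠ 0) : nu d v ≠ 0 := fun h => by
  obtain ⟨i, hi⟩ := Function.ne_iff.1 hv
  have hX : eval v (X i ^ d) = 0 := by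
    rw [← nu_apply v ⟨X i ^ d, isHomogeneous_X_pow i d⟩, h, LinearMap.zero_apply]
  rw [map_pow, eval_X] at hX
  exact pow_ne_zero d hi hX

lemma exists_nu_eq_smul_rep (d : ℕ) (v : Fin (m + 1) → K) :
    ∃ Q ∈ XSet K m d, ∃ c : K, nu d v = c • Q.rep := by
  obtain ⟨c, w, hw, rfl⟩ := exists_eq_smul_isNormalized v
  obtain ⟨a, ha⟩ := Projectivization.exists_smul_eq_mk_rep K w hw.ne_zero
  obtain ⟨b, hb⟩ := Projectivization.exists_smul_eq_mk_rep K (nu d w) (nu_ne_zero hw.ne_zero)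
  refine ⟨.mk K _ (nu_ne_zero hw.ne_zero), ⟨.mk K w hw.ne_zero, ?_⟩, c ^ d * (b⁻¹ : Kˣ), ?_⟩
  · rw [Projectivization.submodule_mk, ← ha, Units.smul_def, nu_smul,
      Submodule.span_singleton_smul_eq (a.isUnit.pow d)]
  · rw [← hb, nu_smul, Units.smul_def, smul_smul, mul_assoc, Units.inv_mul, mul_one]

lemma exists_mem_span_rep_iff_symmRankLE :
    (∃ S : Finset (PN K m d), (S : Set (PN K m d)) ⊆ XSet K m d ∧ S.card ≤ n ∧
      φ ∈ Submodule.span K (Projectivization.rep '' (S : Set (PN K m d)))) ↔ SymmRankLE n φ := by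
  constructor
  · rintro ⟨S, hSX, hSn, hφ⟩
    choose c v hcv using fun Q : S => exists_rep_eq_smul_nu (hSX Q.2)
    obtain ⟨b, rfl⟩ := (Submodule.mem_span_image_finset_iff_exists_fun K).1 hφ
    have hsum : ∑ Q, b Q • (Q : PN K m d).rep = ∑ Q, (b Q * c Q) • nu d (v Q) :=
      Finset.sum_congr rfl fun Q _ => by rw [hcv, smul_smul]
    rw [hsum]
    exact (symmRankLE_sum _ _ v).mono (by simpa using hSn)
  · rintro ⟨μ, hμ, rfl⟩
    choose Q hQX c hc using exists_nu_eq_smul_rep (K := K) (m := m) d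
    refine ⟨μ.support.image Q, ?_, Finset.card_image_le.trans hμ, ?_⟩
    · rw [Finset.coe_image]
      rintro _ ⟨v, -, rfl⟩
      exact hQX v
    · have hsum : (evalSum μ).domRestrict _ = ∑ v ∈ μ.support, μ v • nu d v := by
        ext h
        simp [evalSum_apply, nu_apply, Finsupp.sum]
      rw [hsum]
      refine Submodule.sum_mem _ fun v hv => Submodule.smul_mem _ _ ?_
      rw [hc v]
      exact Submodule.smul_mem _ _ (Submodule.subset_span ⟨_, Finset.mem_image_of_mem Q hv, rfl⟩)

lemma symmRankLE_rep_mk_iff (hφ : φ ≠ 0) :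
    SymmRankLE n (Projectivization.mk K φ hφ).rep ↔ SymmRankLE n φ := by
  obtain ⟨a, ha⟩ := Projectivization.exists_smul_eq_mk_rep K φ hφ
  rw [← ha]
  refine ⟨fun h => ?_, fun h => h.smul a⟩
  simpa [Units.smul_def, smul_smul] using h.smul (a⁻¹ : Kˣ)

lemma forall_apply_smul_rep_mk_iff (hφ : φ ≠ 0) {p : Module.Dual K (Hd K m d) → Prop} :
    (∀ c : K, p (c • (Projectivization.mk K φ hφ).rep)) ↔ ∀ c : K, p (c • φ) := by
  obtain ⟨a, ha⟩ := Projectivization.exists_smul_eq_mk_rep K φ hφ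
  rw [← ha]
  refine ⟨fun h c => ?_, fun h c => ?_⟩
  · simpa [Units.smul_def, smul_smul] using h (c * (a⁻¹ : Kˣ))
  · simpa [Units.smul_def, smul_smul] using h (c * a)

lemma srank_mk_eq (hφ : φ ≠ 0) {r : ℕ} (hr : IsLeast {n | SymmRankLE n φ} r) :
    srank d (Projectivization.mk K φ hφ) = r := by
  have hmin : ∀ S : Finset (PN K m d), (S : Set (PN K m d)) ⊆ XSet K m d →
      (Projectivization.mk K φ hφ).rep ∈
        Submodule.span K (Projectivization.rep '' (S : Set (PN K m d))) → r ≤ S.card := by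
    intro S hSX hS
    have hφS : SymmRankLE S.card (Projectivization.mk K φ hφ).rep :=
      exists_mem_span_rep_iff_symmRankLE.1 ⟨S, hSX, le_rfl, hS⟩
    exact hr.2 ((symmRankLE_rep_mk_iff hφ).1 hφS)
  obtain ⟨S, hSX, hSr, hS⟩ :=
    exists_mem_span_rep_iff_symmRankLE.2 ((symmRankLE_rep_mk_iff hφ).2 hr.1)
  rw [srank, rankWrt]
  refine IsLeast.csInf_eq ⟨⟨S, hSX, hSr.antisymm (hmin S hSX hS), hS⟩, ?_⟩
  rintro _ ⟨T, hTX, rfl, hT⟩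
  exact hmin T hTX hT

lemma mk_mem_secantWrt_iff (hn : 0 < n) (hφ : φ ≠ 0) :
    Projectivization.mk K φ hφ ∈ secantWrt (XSet K m d) n ↔
      ∀ F ∈ polyFunctions K (Module.Dual K (Hd K m d)), (∀ ψ, SymmRankLE n ψ → F ψ = 0) →
        ∀ c : K, F (c • φ) = 0 := by
  refine forall₂_congr fun F _ => ?_
  rw [forall_apply_smul_rep_mk_iff hφ (p := fun ψ => F ψ = 0)]
  refine imp_congr_left ⟨fun h => ?_, fun h Q hQ c => ?_⟩
  · have of_ne_zero : ∀ ψ, SymmRankLE n ψ → ∀ hψ : ψ ≠ 0, ∀ c : K, F (c • ψ) = 0 :=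
      fun ψ hψn hψ => (forall_apply_smul_rep_mk_iff hψ (p := fun ψ => F ψ = 0)).1 <|
        h _ (exists_mem_span_rep_iff_symmRankLE.2 ((symmRankLE_rep_mk_iff hψ).2 hψn))
    intro ψ hψn
    obtain rfl | hψ := eq_or_ne ψ 0
    · have hone : SymmRankLE 1 (nu d (1 : Fin (m + 1) → K)) := by
        simpa [nu_eq_domRestrict] using
          symmRankLE_sum (d := d) {()} (fun _ => (1 : K)) fun _ => (1 : Fin (m + 1) → K)
      simpa using of_ne_zero _ (hone.mono hn) (nu_ne_zero one_ne_zero) 0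
    · simpa using of_ne_zero ψ hψn hψ 1
  · exact h _ ((exists_mem_span_rep_iff_symmRankLE.1 hQ).smul c)

end Projective

section Catalecticant

variable {K : Type*} [Field K]

lemma exists_dual_family {V κ : Type*} [AddCommGroup V] [Module K V] [Finite κ]
    {L : κ → Module.Dual K V} (hL : LinearIndependent K L) :
    ∃ v : κ → V, ∀ i j, L j (v i) = if i = j then 1 else 0 := by
  cases nonempty_fintype κ
  have hsurj : Function.Surjective (LinearMap.pi L) := by
    rw [← LinearMap.range_eq_top]
    by_contra hne
    obtain ⟨F, hF, hle⟩ := Submodule.exists_le_ker_of_lt_top _ (lt_top_iff_ne_top.2 hne)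
    have hrel : ∑ i, F (fun j => if i = j then 1 else 0) • L i = 0 := by
      ext v
      have hker : F (LinearMap.pi L v) = 0 := hle ⟨v, rfl⟩
      rw [LinearMap.pi_apply_eq_sum_univ] at hker
      simpa [mul_comm] using hker
    have hF0 := Fintype.linearIndependent_iff.1 hL _ hrel
    exact hF (LinearMap.ext fun x => by simp [LinearMap.pi_apply_eq_sum_univ F x, hF0])
  choose v hv using fun i : κ => hsurj (Pi.single i 1)
  refine ⟨v, fun i j => ?_⟩
  rw [← LinearMap.pi_apply L, hv, Pi.single_apply]
  exact if_congr eq_comm rfl rfl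

/-- The values and `x₀`-derivatives at `e₁` and `e₂`, and the values at the points of `τ`: up to
the exchange of values and derivatives, these functionals diagonalize
`(f, g) ↦ twoTangents τ (f * g)`. -/
noncomputable def twoTangentsJet (τ : (Fin 3 → K) →₀ K) :
    Fin 4 ⊕ τ.support → MvPolynomial (Fin 3) K →ₗ[K] K :=
  let D : MvPolynomial (Fin 3) K →ₗ[K] MvPolynomial (Fin 3) K := (pderiv 0).toLinearMap
  Sum.elim ![(aeval e₁).toLinearMap, (aeval e₁).toLinearMap ∘ₗ D, (aeval e₂).toLinearMap,
    (aeval e₂).toLinearMap ∘ₗ D] fun v => (aeval v.1).toLinearMap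

/-- The exchange of values and derivatives in the indices of `twoTangentsJet`. -/
def jetSwap {α : Type*} (S : Finset α) : Fin 4 ⊕ S → Fin 4 ⊕ S :=
  Sum.map ![1, 0, 3, 2] id

lemma jetSwap_injective {α : Type*} (S : Finset α) : Function.Injective (jetSwap S) :=
  Sum.map_injective.2 ⟨by decide, Function.injective_id⟩

lemma twoTangents_mul (τ : (Fin 3 → K) →₀ K) (f g : MvPolynomial (Fin 3) K) :
    twoTangents τ (f * g) = ∑ l : Fin 4 ⊕ τ.support,
      Sum.elim (1 : Fin 4 → K) (fun v : τ.support => τ v.1) l *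
        (twoTangentsJet τ l f * twoTangentsJet τ (jetSwap τ.support l) g) := by
  rw [twoTangents_apply, evalSum_apply, Finsupp.sum, ← Finset.sum_coe_sort, Fintype.sum_sum_type]
  simp only [twoTangentsJet, jetSwap, Fin.sum_univ_four, aeval_eq_eval, Derivation.leibniz,
    smul_eq_mul, map_add, map_mul, Finset.univ_eq_attach, Sum.elim_inl, Sum.elim_inr,
    Sum.map_inl, Sum.map_inr, Pi.one_apply, one_mul, id_eq, LinearMap.coe_comp,
    AlgHom.toLinearMap_apply, AlgHom.coe_toLinearMap, Derivation.coeFn_coe, Function.comp_apply,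
    Matrix.cons_val, Matrix.cons_val_zero, Matrix.cons_val_one, add_left_inj]
  ring

namespace IsLineWeight

variable {τ κ : (Fin 3 → K) →₀ K} {O E : Finset (Fin 3 → K)} {t : ℕ}

lemma eq_zero_of_isRelation_single_add (hτ : IsLineWeight τ O E) (ht : τ.support.card < t)
    (hκ : κ.support ⊆ τ.support) {a b : K}
    (h : IsRelation t (Finsupp.single e₁ a + Finsupp.single e₂ b + κ)) :
    a = 0 ∧ b = 0 ∧ κ = 0 := by
  have hsub : (Finsupp.single e₁ a + Finsupp.single e₂ b + κ).support ⊆ {e₁, e₂} ∪ τ.support :=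
    Finsupp.support_add.trans (Finset.union_subset_union (Finsupp.support_add.trans
      (Finset.union_subset_union Finsupp.support_single_subset Finsupp.support_single_subset)) hκ)
  have hcard := (Finset.card_le_card hsub).trans (Finset.card_union_le _ _)
  have hpair := Finset.card_le_two (a := (e₁ : Fin 3 → K)) (b := e₂)
  have hzero : Finsupp.single e₁ a + Finsupp.single e₂ b + κ = 0 := by
    by_contra hne
    have := h.add_two_le_card_support (fun v hv => ?_) hne
    · lia
    · obtain hv | hv := Finset.mem_union.1 (hsub hv)
      · obtain rfl | rfl := by simpa only [Finset.mem_insert, Finset.mem_singleton] using hv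
        · exact isNormalized_e₁
        · exact isNormalized_e₂
      · exact hτ.isNormalized hv
  have he : (e₁ : Fin 3 → K) ≠ e₂ := fun h => by simpa using congrFun h 1
  have hκ₁ : κ e₁ = 0 := Finsupp.notMem_support_iff.1 fun h => hτ.e₁_notMem (hκ h)
  have hκ₂ : κ e₂ = 0 := Finsupp.notMem_support_iff.1 fun h => hτ.e₂_notMem (hκ h)
  have ha : a = 0 := by simpa [he.symm, hκ₁] using DFunLike.congr_fun hzero e₁
  have hb : b = 0 := by simpa [he, hκ₂] using DFunLike.congr_fun hzero e₂
  exact ⟨ha, hb, by simpa [ha, hb] using hzero⟩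

lemma eq_zero_of_jet_relation (hτ : IsLineWeight τ O E) (ht : τ.support.card + 2 ≤ t)
    (hκ : κ.support ⊆ τ.support) {c : Fin 4 → K}
    (h : ∀ g : MvPolynomial (Fin 3) K, g.IsHomogeneous t → c 0 * eval e₁ g +
      c 1 * eval e₁ (pderiv 0 g) + c 2 * eval e₂ g + c 3 * eval e₂ (pderiv 0 g) + evalSum κ g = 0) :
    c = 0 ∧ κ = 0 := by
  have hX : IsRelation (t - 1)
      (Finsupp.single e₁ (c 1) + Finsupp.single e₂ (c 3) + contract (X 0) κ) := fun g hg => by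
    have hhom : (X 0 * g).IsHomogeneous t := by
      convert (isHomogeneous_X K (0 : Fin 3)).mul hg using 1
      lia
    simpa [evalSum_contract] using h _ hhom
  obtain ⟨h1, h3, -⟩ := hτ.eq_zero_of_isRelation_single_add (t := t - 1) (by lia)
    (fun v hv => hκ (mem_support_contract.1 hv).1) hX
  obtain ⟨h0, h2, hκ0⟩ := hτ.eq_zero_of_isRelation_single_add (t := t) (a := c 0) (b := c 2)
    (by lia) hκ fun g hg => by simpa [h1, h3] using h g hg
  exact ⟨funext fun i => by fin_cases i <;> assumption, hκ0⟩

lemma linearIndependent_twoTangentsJet (hτ : IsLineWeight τ O E)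
    (ht : τ.support.card + 2 ≤ t) : LinearIndependent K fun l =>
      (twoTangentsJet τ l).domRestrict (homogeneousSubmodule (Fin 3) K t) := by
  rw [Fintype.linearIndependent_iff]
  intro c hc
  let κ : (Fin 3 → K) →₀ K := Finsupp.indicator τ.support fun v hv => c (.inr ⟨v, hv⟩)
  obtain ⟨hc0, hκ⟩ := hτ.eq_zero_of_jet_relation (κ := κ) (c := c ∘ .inl) ht
    (Finsupp.support_indicator_subset _ _) fun g hg => by
      have hg := DFunLike.congr_fun hc ⟨g, hg⟩
      rw [evalSum_apply, Finsupp.sum_of_support_subset _ (Finsupp.support_indicator_subset _ _) _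
        (by simp), ← Finset.sum_coe_sort]
      simpa [κ, twoTangentsJet, Fintype.sum_sum_type, Fin.sum_univ_four, aeval_eq_eval] using hg
  rintro (i | v)
  · exact congrFun hc0 i
  · simpa [κ] using DFunLike.congr_fun hκ v.1

theorem exists_det_twoTangents_ne_zero (hτ : IsLineWeight τ O E) {d : ℕ}
    (hd : 2 * τ.support.card + 4 ≤ d) :
    ∃ f g : Fin 4 ⊕ τ.support → MvPolynomial (Fin 3) K,
      (∀ i j, (f i * g j).IsHomogeneous d) ∧
        (Matrix.of fun i j => twoTangents τ (f i * g j)).det ≠ 0 := by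
  obtain ⟨t, t', rfl, ht, ht'⟩ : ∃ t t', t + t' = d ∧ τ.support.card + 2 ≤ t ∧
      τ.support.card + 2 ≤ t' := ⟨τ.support.card + 2, d - (τ.support.card + 2), by lia⟩
  obtain ⟨f, hf⟩ := exists_dual_family (hτ.linearIndependent_twoTangentsJet ht)
  obtain ⟨g, hg⟩ := exists_dual_family (hτ.linearIndependent_twoTangentsJet ht')
  refine ⟨fun i => f i, fun j => g (jetSwap _ j), fun i j => (f i).2.mul (g _).2, ?_⟩
  have hdiag : (Matrix.of fun i j => twoTangents τ (f i * g (jetSwap _ j))) =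
      Matrix.diagonal (Sum.elim (1 : Fin 4 → K) fun v : τ.support => τ v.1) := by
    ext i j
    simp only [LinearMap.domRestrict_apply] at hf hg
    simp only [Matrix.of_apply, twoTangents_mul, hf, hg, Matrix.diagonal_apply,
      (jetSwap_injective τ.support).eq_iff, mul_ite, mul_one, mul_zero,
      Finset.sum_ite_eq, Finset.mem_univ, if_true]
    exact if_ctx_congr Iff.rfl (fun h => h ▸ rfl) fun _ => rfl
  rw [hdiag, Matrix.det_diagonal, Finset.prod_ne_zero_iff]
  rintro (i | v) -
  · exact one_ne_zero
  · exact Finsupp.mem_support_iff.1 v.2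

end IsLineWeight

end Catalecticant

section BorderRank

variable {K : Type*} [Field K]

lemma sum_pow_mul_coeff_succ {g : Polynomial K} {d : ℕ}
    (hg : g.natDegree ≤ d) {ε : K} (hε : ε ≠ 0) :
    ∑ n ∈ Finset.range d, ε ^ n * g.coeff (n + 1) = ε⁻¹ * (g.eval ε - g.eval 0) := by
  rw [Polynomial.eval_eq_sum_range' (Nat.lt_succ_of_le hg), Finset.sum_range_succ',
    ← Polynomial.coeff_zero_eq_eval_zero, pow_zero, mul_one, add_sub_cancel_right, Finset.mul_sum]
  refine Finset.sum_congr rfl fun n _ => ?_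
  rw [pow_succ]
  field_simp

/-- The sum of the points `τ` and of the two secants through `e₁`, `e₁ + ε e₀` and through `e₂`,
`e₂ + ε e₀`, which tend to the tangent lines of `twoTangents τ` as `ε → 0`. -/
noncomputable def twoSecants (τ : (Fin 3 → K) →₀ K) (ε : K) :
    (Fin 3 → K) →₀ K :=
  Finsupp.single (e₁ + ε • e₀) ε⁻¹ + Finsupp.single e₁ (-ε⁻¹) +
    (Finsupp.single (e₂ + ε • e₀) ε⁻¹ + Finsupp.single e₂ (-ε⁻¹)) + τ

lemma card_support_twoSecants_le (τ : (Fin 3 → K) →₀ K) (ε : K) :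
    (twoSecants τ ε).support.card ≤ 4 + τ.support.card := by
  have hadd : ∀ μ ν : (Fin 3 → K) →₀ K, (μ + ν).support.card ≤ μ.support.card + ν.support.card :=
    fun μ ν => (Finset.card_le_card Finsupp.support_add).trans (Finset.card_union_le _ _)
  have hsingle : ∀ (v : Fin 3 → K) (a : K), (Finsupp.single v a).support.card ≤ 1 := fun v a =>
    (Finset.card_le_card Finsupp.support_single_subset).trans_eq (Finset.card_singleton v)
  grind [twoSecants]

/-- The coefficient of `ε ^ n` in `evalSum (twoSecants τ ε)`. -/
noncomputable def twoSecantsCoeff (τ : (Fin 3 → K) →₀ K) (n : ℕ) :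
    MvPolynomial (Fin 3) K →ₗ[K] K :=
  Polynomial.lcoeff K (n + 1) ∘ₗ
    ((restrictLine e₁ e₀).toLinearMap + (restrictLine e₂ e₀).toLinearMap) +
      if n = 0 then evalSum τ else 0

lemma twoSecantsCoeff_zero (τ : (Fin 3 → K) →₀ K) :
    twoSecantsCoeff τ 0 = twoTangents τ := by
  refine LinearMap.ext fun h => ?_
  simp [twoSecantsCoeff, twoTangents_apply, coeff_one_restrictLine, Fin.sum_univ_three]

lemma sum_pow_smul_twoSecantsCoeff (τ : (Fin 3 → K) →₀ K) {d : ℕ} {ε : K}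
    (hε : ε ≠ 0) {h : MvPolynomial (Fin 3) K} (hh : h.IsHomogeneous d) :
    ∑ n ∈ Finset.range (d + 1), ε ^ n * twoSecantsCoeff τ n h = evalSum (twoSecants τ ε) h := by
  have hsecant : ∀ p : Fin 3 → K, ∑ n ∈ Finset.range (d + 1),
      ε ^ n * (restrictLine p e₀ h).coeff (n + 1) = ε⁻¹ * (eval (p + ε • e₀) h - eval p h) :=
    fun p => by
      rw [sum_pow_mul_coeff_succ ((natDegree_restrictLine_le p e₀ hh).trans d.le_succ) hε,
        eval_restrictLine, eval_restrictLine, zero_smul, add_zero]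
  have hsplit : ∀ n, twoSecantsCoeff τ n h = (restrictLine e₁ e₀ h).coeff (n + 1) +
      (restrictLine e₂ e₀ h).coeff (n + 1) + if n = 0 then evalSum τ h else 0 := fun n => by
    simp only [twoSecantsCoeff, LinearMap.add_apply, LinearMap.comp_apply, map_add,
      AlgHom.toLinearMap_apply, Polynomial.lcoeff_apply]
    split_ifs <;> rfl
  simp only [hsplit, mul_add, Finset.sum_add_distrib, hsecant, mul_ite, mul_zero,
    Finset.sum_ite_eq', Finset.mem_range, Nat.succ_pos, if_true, pow_zero, one_mul, twoSecants,
    map_add, LinearMap.add_apply, evalSum_single]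
  ring

end BorderRank

section Rank

variable {K : Type} [Field K] {m d r : ℕ} {τ : (Fin 3 → K) →₀ K} {O E : Finset (Fin 3 → K)}
  {f : Fin 3 → Fin (m + 1)} {hf : Function.Injective f}

lemma apply_smul_pullRestrict_twoTangents_eq_zero [Infinite K]
    {F : Module.Dual K (Hd K m d) → K} (hF : F ∈ polyFunctions K (Module.Dual K (Hd K m d)))
    (hzero : ∀ ψ, SymmRankLE (4 + τ.support.card) ψ → F ψ = 0) (c : K) :
    F (c • pullRestrict hf d (twoTangents τ)) = 0 := by
  rw [← twoSecantsCoeff_zero]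
  refine polyFunctions_apply_zero_of_curve hF d
    (fun n => c • pullRestrict hf d (twoSecantsCoeff τ n)) fun ε hε => hzero _ ?_
  have hsum : ∑ n ∈ Finset.range (d + 1), ε ^ n • c • pullRestrict hf d (twoSecantsCoeff τ n) =
      c • pullRestrict hf d (evalSum (twoSecants τ ε)) := by
    ext h
    rw [LinearMap.smul_apply, pullRestrict_apply,
      ← sum_pow_smul_twoSecantsCoeff τ hε (isHomogeneous_killCompl h.2)]
    simp [pullRestrict_apply, Finset.mul_sum, mul_left_comm c]
  rw [hsum]
  exact (symmRankLE_pullRestrict_iff.2 ⟨_, card_support_twoSecants_le τ ε, rfl⟩).smul c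

lemma IsLineWeight.le_of_forall_apply_eq_zero (hτ : IsLineWeight τ O E)
    (hd : 2 * τ.support.card + 4 ≤ d) {n : ℕ}
    (h : ∀ F ∈ polyFunctions K (Module.Dual K (Hd K m d)), (∀ ψ, SymmRankLE n ψ → F ψ = 0) →
      F (pullRestrict hf d (twoTangents τ)) = 0) : 4 + τ.support.card ≤ n := by
  by_contra! hn
  obtain ⟨p, q, hpq, hdet⟩ := hτ.exists_det_twoTangents_ne_zero hd
  have hhom : ∀ i j, (rename f (p i) * rename f (q j)).IsHomogeneous d := fun i j => by
    rw [← map_mul]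
    exact (hpq i j).rename_isHomogeneous
  have hvanish := h _ (det_mem_polyFunctions fun i j => ⟨_, hhom i j⟩) fun ψ hψ =>
    hψ.det_eq_zero (by simpa using hn) hhom
  refine hdet ?_
  simpa only [pullRestrict_apply, map_mul, killCompl_rename_app] using hvanish

theorem IsLineWeight.brank_mk_pullRestrict [Infinite K] (hτ : IsLineWeight τ O E)
    (hd : 2 * τ.support.card + 4 ≤ d) (h0 : pullRestrict hf d (twoTangents τ) ≠ 0) :
    brank d (Projectivization.mk K _ h0) = 4 + τ.support.card := by
  refine IsLeast.csInf_eq ⟨⟨by lia, (mk_mem_secantWrt_iff (by lia) h0).2 fun F hF hzero =>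
    apply_smul_pullRestrict_twoTangents_eq_zero hF hzero⟩, ?_⟩
  rintro n ⟨hn, hmem⟩
  refine hτ.le_of_forall_apply_eq_zero (hf := hf) hd fun F hF hzero => ?_
  simpa using (mk_mem_secantWrt_iff hn h0).1 hmem F hF hzero 1

lemma IsLineWeight.le_of_symmRankLE_twoTangents (hτ : IsLineWeight τ O E) (hd : 2 * E.card + 9 ≤ d)
    {n : ℕ} (h : SymmRankLE n ((twoTangents τ).domRestrict (homogeneousSubmodule (Fin 3) K d))) :
    2 * d + E.card ≤ n + O.card + 1 := by
  obtain ⟨σ, hσn, hnorm, heq⟩ := h.exists_isNormalized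
  have hσ : IsDecomposition d τ σ :=
    ⟨fun h hh => by simpa using LinearMap.congr_fun heq ⟨h, hh⟩, hnorm⟩
  have := hσ.le_card_support hτ hd
  lia

theorem IsLineWeight.isLeast_symmRankLE_pullRestrict (hτ : IsLineWeight τ O E)
    (hd : 2 * E.card + 9 ≤ d) {σ : (Fin 3 → K) →₀ K}
    (hσ : ∀ h : MvPolynomial (Fin 3) K, h.IsHomogeneous d → twoTangents τ h = evalSum σ h)
    (hr : r + O.card + 1 = 2 * d + E.card) (hσr : σ.support.card ≤ r) :
    IsLeast {n | SymmRankLE n (pullRestrict hf d (twoTangents τ))} r := by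
  refine ⟨symmRankLE_pullRestrict_iff.2 ⟨σ, hσr, LinearMap.ext fun h => hσ h h.2⟩, fun n hn => ?_⟩
  have := hτ.le_of_symmRankLE_twoTangents hd (symmRankLE_pullRestrict_iff.1 hn)
  lia

theorem exists_brank_eq_srank_eq [CharZero K] {u k : ℕ} (hm : 2 ≤ m) (hu : 1 ≤ u)
    (hd : 2 * (u + k) + 4 ≤ d) (hd' : 2 * k + 9 ≤ d) (hr : r + u + 1 = 2 * d + k) :
    ∃ P : PN K m d, brank d P = 4 + (u + k) ∧ srank d P = r := by
  obtain ⟨τ, σ, O, E, hτ, rfl, rfl, hcard, hσ⟩ :=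
    exists_twoTangents_eq_evalSum (K := K) (d := d) (k := k) hu (by lia) (by lia)
  have hf : Function.Injective (Fin.castLE (Nat.succ_le_succ hm)) := Fin.castLE_injective _
  have hleast := hτ.isLeast_symmRankLE_pullRestrict (hf := hf) hd' hσ hr (by lia)
  have h0 : pullRestrict hf d (twoTangents τ) ≠ 0 := fun h0 => by
    have : r ≤ 0 := hleast.2 ⟨0, by simp, by rw [h0, map_zero]; rfl⟩
    lia
  refine ⟨.mk K _ h0, ?_, srank_mk_eq h0 hleast⟩
  rw [← hτ.card_support] at hd ⊢
  exact hτ.brank_mk_pullRestrict hd h0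

end Rank

end SymmetricRank

theorem stmt18_general (K : Type) [Field K] [CharZero K] (m s d : ℕ) (hm : 2 ≤ m)
    (hd : 2 * s ≤ d + 1) :
    ∀ r : ℕ, 2 * d + 3 ≤ r + s → r + 7 ≤ 2 * d + s → (r + s) % 2 = 1 →
      (sigmaSet K m d s r).Nonempty := by
  intro r hr hr' hparity
  obtain ⟨k, hk⟩ : ∃ k, r + s = 2 * d + 3 + 2 * k := ⟨(r + s - (2 * d + 3)) / 2, by lia⟩
  obtain ⟨u, rfl⟩ : ∃ u, s = 4 + (u + k) := ⟨s - 4 - k, by lia⟩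
  exact SymmetricRank.exists_brank_eq_srank_eq hm (by lia) (by lia) (by lia) (by lia)

/-- Step (e) of the proof of the main theorem: nonemptiness of `σ_{s,r}(X_{m,d})` for
`2d+3-s ≤ r ≤ 2d+s-7` with `r + s` odd. -/
theorem stmt18 (K : Type) [Field K] [IsAlgClosed K] [CharZero K]
    (m s d : ℕ) (hm : 2 ≤ m) (hs : 5 ≤ s) (hd : 2 * s + 2 ≤ d) :
    ∀ r : ℕ, 2 * d + 3 ≤ r + s → r + 7 ≤ 2 * d + s → (r + s) % 2 = 1 →
      (sigmaSet K m d s r).Nonempty :=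
  stmt18_general K m s d hm (by lia)
end
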